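/- Let M be a compact connected boundaryless topological manifold of dimension n with a compatible metric and let f : M → M be an expansive homeomorphism. Then for every p ∈ Per_H there exist open neighborhoods V₁ and V₂ of p such that for every q ∈ Per_H ∩ V₁ one has S_q ∩ U_p ≠ ∅ and U_q ∩ S_p ≠ ∅, where for z ∈ M we write S_z = cc_z(W^s(z) ∩ V₂) and U_z = cc_z(W^u(z) ∩ V₂). -/

import Mathlib

open Metric Set

variable {M : Type*} [MetricSpace M]

/-- Iterates of a homeomorphism, indexed by `ℤ`. -/
def iterZ (f : M ≃ₜ M) (k : ℤ) (x : M) : M := (f.toEquiv ^ k) x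

/-- `f` is expansive with expansivity constant `α`. -/
def IsExpansive (f : M ≃ₜ M) (α : ℝ) : Prop :=
  ∀ x y : M, x ≠ y → ∃ k : ℤ, α < dist (iterZ f k x) (iterZ f k y)

/-- Stable set of `x`. -/
def Ws (f : M ≃ₜ M) (x : M) : Set M :=
  {y | Filter.Tendsto (fun k : ℤ => dist (iterZ f k x) (iterZ f k y)) Filter.atTop (nhds 0)}

/-- Unstable set of `x`. -/
def Wu (f : M ≃ₜ M) (x : M) : Set M :=
  {y | Filter.Tendsto (fun k : ℤ => dist (iterZ f k x) (iterZ f k y)) Filter.atBot (nhds 0)}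

/-- Local (`ε`-local) stable set of `x`. -/
def WsLoc (f : M ≃ₜ M) (ε : ℝ) (x : M) : Set M :=
  {y | ∀ k : ℤ, 0 ≤ k → dist (iterZ f k x) (iterZ f k y) ≤ ε}

/-- Local (`ε`-local) unstable set of `x`. -/
def WuLoc (f : M ≃ₜ M) (ε : ℝ) (x : M) : Set M :=
  {y | ∀ k : ℤ, k ≤ 0 → dist (iterZ f k x) (iterZ f k y) ≤ ε}

/-- The model space `ℝ^r × ℝ^{n-r}`. -/
abbrev ModelSp (n r : ℕ) := (Fin r → ℝ) × (Fin (n - r) → ℝ)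

/-- The model hyperbolic linear map `L(a,b) = (a/2, 2b)`. -/
noncomputable def modelL (n r : ℕ) : ModelSp n r → ModelSp n r :=
  fun q => (fun i => q.1 i / 2, fun i => 2 * q.2 i)

/-- Topologically hyperbolic periodic points of index `r` (`Per_H^r`). -/
def PerHr (f : M ≃ₜ M) (n r : ℕ) : Set M :=
  {p | ∃ l : ℕ, 1 ≤ l ∧ (f.toEquiv ^ l) p = p ∧
    ∃ (U : Set M) (V : Set (ModelSp n r)) (h : U ≃ₜ V),
      IsOpen U ∧ IsOpen V ∧ (0 : ModelSp n r) ∈ V ∧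
      ∃ hp : p ∈ U, ((h ⟨p, hp⟩ : V) : ModelSp n r) = 0 ∧
        ∀ z : M, ∀ hz : z ∈ U, ∀ hz' : (f.toEquiv ^ l) z ∈ U,
          ((h ⟨(f.toEquiv ^ l) z, hz'⟩ : V) : ModelSp n r) = modelL n r (h ⟨z, hz⟩)}

/-- All topologically hyperbolic periodic points (`Per_H`). -/
def PerH (f : M ≃ₜ M) (n : ℕ) : Set M := ⋃ r ∈ Finset.range (n + 1), PerHr f n r

/-- `p` admits a local product structure. -/
def AdmitsLPS (f : M ≃ₜ M) (n : ℕ) (p : M) : Prop :=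
  ∃ (k : ℕ) (h : (Fin k → ℝ) × (Fin (n - k) → ℝ) → M) (ε : ℝ),
    0 < ε ∧ Topology.IsEmbedding h ∧ p ∈ Set.range h ∧
    ∀ x : Fin k → ℝ, ∀ y : Fin (n - k) → ℝ,
      h '' ({x} ×ˢ univ) = WsLoc f ε (h (x, y)) ∩ Set.range h ∧
      h '' (univ ×ˢ {y}) = WuLoc f ε (h (x, y)) ∩ Set.range h

/-!
By expansivity, the `ε`-local stable and unstable sets of a point meet only at that point. Around a
hyperbolic `q` near `p`, the discs of a hyperbolic chart extend to continuous parametrisations `σ`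
and `υ` of pieces of the stable and unstable sets of `q`, restricted to the compact sets `A` and `B`
of parameters whose points are `ε`-local; over the frontier of `A` or `B` some iterate is at
distance exactly `ε`. Read in the chart of `p`, the map `(a, b) ↦ σ a - υ b` on `A × B` vanishes
only at the origin, near which it deforms to a local homeomorphism, so its zero is essential: every
map with the same values on the frontier has a zero. This is an instance of the invariance of the
degree, computed as the integral of `det D(T ∘ F)` for a smooth bump map `T`: the integral depends
only on `F` off a compact set.

By compactness, for `q` close to `p` the local stable set of `q` is almost horizontal in the chart
of `p` and its frontier is far out horizontally, and symmetrically for the unstable set. Hence one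
may deform to `(a, b) ↦ ((σ a).1, -(υ b).2)`, which must therefore vanish somewhere. Replacing `A`
or `B` by clopen pieces around the origin places the zeros in the connected component of the origin,
and points of the chart with first (second) coordinate `0` lie on the unstable (stable) disc of `p`.
-/

section Degree

open MeasureTheory Filter Topology

variable {E : Type*} [NormedAddCommGroup E] [NormedSpace ℝ E]

lemma det_fderiv_comp {G T : E → E} (hT : Differentiable ℝ T) (hG : Differentiable ℝ G) (x : E) :
    (fderiv ℝ (T ∘ G) x).det = (fderiv ℝ T (G x)).det * (fderiv ℝ G x).det := by
  rw [fderiv_comp x (hT _) (hG x)]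
  exact LinearMap.det_comp _ _

variable [FiniteDimensional ℝ E]

lemma det_smul_continuousLinearMap (s : ℝ) (A : E →L[ℝ] E) :
    (s • A).det = s ^ Module.finrank ℝ E * A.det :=
  LinearMap.det_smul s (A : E →ₗ[ℝ] E)

lemma det_zero_continuousLinearMap [Nontrivial E] : (0 : E →L[ℝ] E).det = 0 :=
  LinearMap.det_zero.trans (zero_pow Module.finrank_pos.ne')

lemma det_id_sub_pos_of_norm_lt_one {A : E →L[ℝ] E} (hA : ‖A‖ < 1) :
    0 < (ContinuousLinearMap.id ℝ E - A).det := by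
  have hcont : Continuous fun t : ℝ ↦ (ContinuousLinearMap.id ℝ E - t • A).det :=
    ContinuousLinearMap.continuous_det.comp (by fun_prop)
  have hne : ∀ t ∈ Icc (0 : ℝ) 1, (ContinuousLinearMap.id ℝ E - t • A).det ≠ 0 := by
    intro t ht
    have hnorm : ‖t • A‖ < 1 := by
      rw [norm_smul, Real.norm_of_nonneg ht.1]
      exact (mul_le_of_le_one_left (norm_nonneg A) ht.2).trans_lt hA
    have hunit := isUnit_one_sub_of_norm_lt_one hnorm
    exact (LinearMap.isUnit_det _ (hunit.map ContinuousLinearMap.toLinearMapRingHom)).ne_zero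
  have h0 : (ContinuousLinearMap.id ℝ E - (0 : ℝ) • A).det = 1 := by
    simp [ContinuousLinearMap.det]
  by_contra! hle
  obtain ⟨t, ht, hzero⟩ : (0 : ℝ) ∈
      (fun t : ℝ ↦ (ContinuousLinearMap.id ℝ E - t • A).det) '' Icc 0 1 :=
    intermediate_value_Icc' zero_le_one hcont.continuousOn ⟨by simpa using hle, h0 ▸ zero_le_one⟩
  exact hne t ht hzero

lemma exists_eval_zero_eq_sum_eval {v : ℕ → ℝ} (hv : Function.Injective v) (n : ℕ) :
    ∃ c : ℕ → ℝ, ∀ P : Polynomial ℝ, P.natDegree ≤ n →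
      P.eval 0 = ∑ i ∈ Finset.range (n + 1), c i * P.eval (v i) := by
  refine ⟨fun i ↦ (Lagrange.basis (Finset.range (n + 1)) v i).eval 0, fun P hP ↦ ?_⟩
  have hdeg : P.degree < (Finset.range (n + 1)).card := by
    rw [Finset.card_range]
    exact Polynomial.degree_le_natDegree.trans_lt (by exact_mod_cast Nat.lt_succ_of_le hP)
  conv_lhs => rw [Lagrange.eq_interpolate hv.injOn hdeg, Lagrange.interpolate_apply]
  simp [Polynomial.eval_finsetSum, mul_comm]

lemma exists_det_eq_sum_det_smul_id_sub [Nontrivial E] {s : ℕ → ℝ} (hs : Function.Injective s) :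
    ∃ w : ℕ → ℝ,
      ∑ i ∈ Finset.range (Module.finrank ℝ E + 1), w i * s i ^ Module.finrank ℝ E = 0 ∧
      ∀ A : E →L[ℝ] E, A.det = ∑ i ∈ Finset.range (Module.finrank ℝ E + 1),
        w i * (s i • ContinuousLinearMap.id ℝ E - A).det := by
  have hn : Module.finrank ℝ E ≠ 0 := Module.finrank_pos.ne'
  obtain ⟨c, hc⟩ := exists_eval_zero_eq_sum_eval hs (Module.finrank ℝ E)
  refine ⟨fun i ↦ (-1) ^ Module.finrank ℝ E * c i, ?_, fun A ↦ ?_⟩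
  · have := hc (Polynomial.X ^ Module.finrank ℝ E) (by simp)
    simp_rw [mul_assoc, ← Finset.mul_sum]
    simpa [hn] using this.symm
  · have heval (t : ℝ) : (A : E →ₗ[ℝ] E).charpoly.eval t =
        (t • ContinuousLinearMap.id ℝ E - A).det := LinearMap.eval_charpoly _ t
    have := hc (A : E →ₗ[ℝ] E).charpoly (LinearMap.charpoly_natDegree _).le
    simp only [heval, zero_smul, zero_sub] at this
    simp_rw [mul_assoc, ← Finset.mul_sum]
    rw [← this, ← det_smul_continuousLinearMap, neg_one_smul, neg_neg]

section Integral

variable [MeasurableSpace E] [BorelSpace E] (μ : Measure E) [μ.IsAddHaarMeasure]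

-- `x ↦ x - v x` is a bijection of `E` fixing every point off `S`, hence it preserves `S`.
lemma setIntegral_det_id_sub_fderiv {v : E → E} (hv : Differentiable ℝ v) {c : ℝ}
    (hc : c < 1) (hvc : ∀ x, ‖fderiv ℝ v x‖ ≤ c) {S : Set E} (hS : MeasurableSet S)
    (hvS : ∀ x ∉ S, v x = 0) :
    ∫ x in S, (ContinuousLinearMap.id ℝ E - fderiv ℝ v x).det ∂μ = μ.real S := by
  lift c to NNReal using (norm_nonneg _).trans (hvc 0)
  let G : E → E := fun x ↦ x - v x
  have happrox : ApproximatesLinearOn G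
      (ContinuousLinearEquiv.refl ℝ E : E →L[ℝ] E) univ c := by
    intro x _ y _
    have hsub : G x - G y - (x - y) = v y - v x := by simp only [G]; abel
    simpa [hsub, norm_sub_rev x y] using (lipschitzWith_of_nnnorm_fderiv_le hv hvc).norm_sub_le y x
  have hc' : Subsingleton E ∨
      c < ‖((ContinuousLinearEquiv.refl ℝ E).symm : E →L[ℝ] E)‖₊⁻¹ := by
    rcases subsingleton_or_nontrivial E with h | h
    · exact .inl h
    · exact .inr (by simpa [ContinuousLinearMap.nnnorm_id] using hc)
  have hinj : Function.Injective G := injOn_univ.1 (happrox.injOn hc')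
  have hsurj : Function.Surjective G := happrox.surjective hc'
  have himage : G '' S = S := by
    have hcompl : G '' Sᶜ = Sᶜ := by
      conv_rhs => rw [← image_id Sᶜ]
      exact image_congr fun x hx ↦ by simp [G, hvS x hx]
    rw [← compl_inj_iff, ← image_compl_eq ⟨hinj, hsurj⟩, hcompl]
  have hpos : ∀ x, 0 < (ContinuousLinearMap.id ℝ E - fderiv ℝ v x).det := fun x ↦
    det_id_sub_pos_of_norm_lt_one ((hvc x).trans_lt hc)
  have hchange := integral_image_eq_integral_abs_det_fderiv_smul μ hS
    (fun x _ ↦ ((hasFDerivAt_id x).sub (hv x).hasFDerivAt).hasFDerivWithinAt)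
    hinj.injOn fun _ ↦ (1 : ℝ)
  change ∫ _ in G '' S, (1 : ℝ) ∂μ = _ at hchange
  simpa [himage, abs_of_pos (hpos _)] using hchange.symm

lemma setIntegral_det_smul_id_sub_fderiv {u : E → E} (hu : Differentiable ℝ u) {C s : ℝ}
    (hs : 0 < s) (hCs : C < s) (huC : ∀ x, ‖fderiv ℝ u x‖ ≤ C) {S : Set E}
    (hS : MeasurableSet S) (huS : ∀ x ∉ S, u x = 0) :
    ∫ x in S, (s • ContinuousLinearMap.id ℝ E - fderiv ℝ u x).det ∂μ =
      s ^ Module.finrank ℝ E * μ.real S := by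
  have hderiv (x : E) : fderiv ℝ (s⁻¹ • u) x = s⁻¹ • fderiv ℝ u x :=
    fderiv_const_smul (hu x) s⁻¹
  have hscaled := setIntegral_det_id_sub_fderiv μ (hu.const_smul s⁻¹)
    ((div_lt_one hs).2 hCs)
    (fun x ↦ by
      rw [hderiv, norm_smul, norm_inv, Real.norm_of_nonneg hs.le, inv_mul_eq_div]
      gcongr
      exact huC x)
    hS (fun x hx ↦ by simp [huS x hx])
  have hdet (x : E) : (s • ContinuousLinearMap.id ℝ E - fderiv ℝ u x).det =
      s ^ Module.finrank ℝ E * (ContinuousLinearMap.id ℝ E - fderiv ℝ (s⁻¹ • u) x).det := by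
    rw [← det_smul_continuousLinearMap, hderiv, smul_sub, smul_inv_smul₀ hs.ne']
  simp_rw [hdet, integral_const_mul, hscaled]

-- `s ↦ ∫ det (s - Du)` is a polynomial agreeing with `s ^ n * μ(tsupport u)` for all large `s`;
-- its value at `s = 0` is therefore `0`.
lemma integral_det_fderiv_eq_zero [Nontrivial E] {u : E → E} (hu : ContDiff ℝ 1 u)
    (hc : HasCompactSupport u) : ∫ x, (fderiv ℝ u x).det ∂μ = 0 := by
  have hcont : Continuous (fderiv ℝ u) := hu.continuous_fderiv one_ne_zero
  obtain ⟨C, hC⟩ := (hc.fderiv (𝕜 := ℝ)).exists_bound_of_continuous hcont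
  have hC0 : 0 ≤ C := (norm_nonneg _).trans (hC 0)
  let s : ℕ → ℝ := fun i ↦ C + 1 + i
  obtain ⟨w, hwn, hw⟩ := exists_det_eq_sum_det_smul_id_sub (E := E) (s := s)
    fun i j hij ↦ by simpa [s] using hij
  have hint (i : ℕ) : IntegrableOn
      (fun x ↦ w i * (s i • ContinuousLinearMap.id ℝ E - fderiv ℝ u x).det) (tsupport u) μ :=
    ((ContinuousLinearMap.continuous_det.comp
      (continuous_const.sub hcont)).const_mul (w i)).continuousOn.integrableOn_compact hc
  have hterm (i : ℕ) :
      ∫ x in tsupport u, w i * (s i • ContinuousLinearMap.id ℝ E - fderiv ℝ u x).det ∂μ =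
        w i * s i ^ Module.finrank ℝ E * μ.real (tsupport u) := by
    rw [integral_const_mul, setIntegral_det_smul_id_sub_fderiv μ (hu.differentiable one_ne_zero)
      (by positivity) (by simp only [s]; linarith [(Nat.cast_nonneg i : (0 : ℝ) ≤ i)]) hC
      (isClosed_tsupport u).measurableSet fun x ↦ image_eq_zero_of_notMem_tsupport, mul_assoc]
  rw [← setIntegral_eq_integral_of_forall_compl_eq_zero (s := tsupport u)]
  · simp_rw [hw (fderiv ℝ u _)]
    rw [integral_finsetSum _ fun i _ ↦ hint i]
    simp_rw [hterm, ← Finset.sum_mul, hwn, zero_mul]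
  · intro x hx
    rw [image_eq_zero_of_notMem_tsupport fun h ↦ hx (tsupport_fderiv_subset ℝ h),
      det_zero_continuousLinearMap]

lemma integral_det_fderiv_sub_eq_zero [Nontrivial E] {F G : E → E} (hF : ContDiff ℝ 1 F)
    (hG : ContDiff ℝ 1 G) {K : Set E} (hK : IsCompact K) (hFG : EqOn F G Kᶜ) :
    ∫ x, ((fderiv ℝ F x).det - (fderiv ℝ G x).det) ∂μ = 0 := by
  obtain ⟨R, hR, hKR⟩ := hK.isBounded.subset_closedBall_lt 0 (0 : E)
  let χ : ContDiffBump (0 : E) := ⟨R + 1, R + 2, by linarith, by linarith⟩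
  have hsmooth {H : E → E} (hH : ContDiff ℝ 1 H) : ContDiff ℝ 1 fun x ↦ χ x • H x :=
    χ.contDiff.smul hH
  have hsupp (H : E → E) : HasCompactSupport fun x ↦ χ x • H x :=
    χ.hasCompactSupport.smul_right
  have hint {H : E → E} (hH : ContDiff ℝ 1 H) :
      Integrable (fun x ↦ (fderiv ℝ (fun y ↦ χ y • H y) x).det) μ := by
    exact (ContinuousLinearMap.continuous_det.comp
      ((hsmooth hH).continuous_fderiv one_ne_zero)).integrable_of_hasCompactSupport
      (((hsupp H).fderiv (𝕜 := ℝ)).comp_left det_zero_continuousLinearMap)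
  have hlocal (x : E) : (fderiv ℝ F x).det - (fderiv ℝ G x).det =
      (fderiv ℝ (fun y ↦ χ y • F y) x).det - (fderiv ℝ (fun y ↦ χ y • G y) x).det := by
    by_cases hx : x ∈ K
    · have hχ : ∀ᶠ y in 𝓝 x, χ y = 1 :=
        χ.eventuallyEq_one_of_mem_ball (lt_of_le_of_lt (mem_closedBall.1 (hKR hx)) (by simp [χ]))
      have hcut (H : E → E) : fderiv ℝ (fun y ↦ χ y • H y) x = fderiv ℝ H x := by
        refine EventuallyEq.fderiv_eq ?_
        filter_upwards [hχ] with y hy using by simp [hy]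
      rw [hcut, hcut]
    · have hnear : F =ᶠ[𝓝 x] G :=
        hFG.eventuallyEq_of_mem (hK.isClosed.isOpen_compl.mem_nhds hx)
      rw [hnear.fderiv_eq, ((EventuallyEq.refl _ χ).smul hnear).fderiv_eq, sub_self, sub_self]
  simp_rw [hlocal]
  rw [integral_sub (hint hF) (hint hG), integral_det_fderiv_eq_zero μ (hsmooth hF) (hsupp F),
    integral_det_fderiv_eq_zero μ (hsmooth hG) (hsupp G), sub_zero]

end Integral

lemma exists_contDiff_real_bump_primitive {δ : ℝ} (hδ : 0 < δ) :
    ∃ τ b : ℝ → ℝ, ContDiff ℝ 1 τ ∧ (∀ s, HasDerivAt τ (b s) s) ∧ (∀ s, 0 ≤ b s) ∧ b 0 = 1 ∧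
      ∀ s, δ ≤ |s| → b s = 0 := by
  let b : ContDiffBump (0 : ℝ) := ⟨δ / 2, δ, by linarith, by linarith⟩
  let τ : ℝ → ℝ := fun s ↦ ∫ x in (0 : ℝ)..s, b x
  have hderiv (s : ℝ) : HasDerivAt τ (b s) s :=
    intervalIntegral.integral_hasDerivAt_right (b.continuous.intervalIntegrable _ _)
      (b.continuous.stronglyMeasurableAtFilter _ _) b.continuous.continuousAt
  refine ⟨τ, b, contDiff_one_iff_deriv.2 ⟨fun s ↦ (hderiv s).differentiableAt, ?_⟩, hderiv,
    fun s ↦ b.nonneg, b.one_of_mem_closedBall (mem_closedBall_self b.rIn_pos.le),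
    fun s hs ↦ b.zero_of_le_dist (by simpa [b] using hs)⟩
  rw [funext fun s ↦ (hderiv s).deriv]
  exact b.continuous

lemma exists_contDiff_det_fderiv_pi_bump (ι : Type*) [Fintype ι] {δ : ℝ} (hδ : 0 < δ) :
    ∃ T : (ι → ℝ) → (ι → ℝ), ContDiff ℝ 1 T ∧ (∀ y, 0 ≤ (fderiv ℝ T y).det) ∧
      (fderiv ℝ T 0).det = 1 ∧ ∀ y, δ ≤ ‖y‖ → (fderiv ℝ T y).det = 0 := by
  obtain ⟨τ, b, hτ, hderiv, hb, hb0, hbδ⟩ := exists_contDiff_real_bump_primitive hδ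
  have hdet (y : ι → ℝ) :
      (fderiv ℝ (fun y : ι → ℝ ↦ fun i ↦ τ (y i)) y).det = ∏ i, b (y i) := by
    have hT : HasFDerivAt (fun y : ι → ℝ ↦ fun i ↦ τ (y i))
        (ContinuousLinearMap.pi fun i ↦
          (ContinuousLinearMap.toSpanSingleton ℝ (b (y i))).comp (ContinuousLinearMap.proj i)) y :=
      hasFDerivAt_pi.2 fun i ↦ (hderiv (y i)).hasFDerivAt.comp y (hasFDerivAt_apply i y)
    rw [hT.fderiv, ContinuousLinearMap.det_pi]
    simp
  refine ⟨fun y i ↦ τ (y i), contDiff_pi.2 fun i ↦ hτ.comp (contDiff_apply ℝ ℝ i),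
    fun y ↦ hdet y ▸ Finset.prod_nonneg fun i _ ↦ hb _, by simp [hdet, hb0], fun y hy ↦ ?_⟩
  rw [hdet, Finset.prod_eq_zero_iff]
  by_contra! hne
  exact hy.not_gt ((pi_norm_lt_iff hδ).2 fun i ↦
    not_le.1 fun hi ↦ hne i (Finset.mem_univ i) (hbδ _ hi))

lemma exists_contDiff_det_fderiv_bump (E : Type*) [NormedAddCommGroup E] [NormedSpace ℝ E]
    [FiniteDimensional ℝ E] {δ : ℝ} (hδ : 0 < δ) :
    ∃ T : E → E, ContDiff ℝ 1 T ∧ (∀ y, 0 ≤ (fderiv ℝ T y).det) ∧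
      (fderiv ℝ T 0).det = 1 ∧ ∀ y, δ ≤ ‖y‖ → (fderiv ℝ T y).det = 0 := by
  let L : E ≃L[ℝ] (Fin (Module.finrank ℝ E) → ℝ) := ContinuousLinearEquiv.ofFinrankEq (by simp)
  obtain ⟨η, hη, hLη⟩ : ∃ η > 0, ∀ y, ‖L y‖ < η → ‖y‖ < δ := by
    have := L.symm.continuous.norm.tendsto' 0 0 (by simp) |>.eventually (gt_mem_nhds hδ)
    obtain ⟨η, hη, h⟩ := Metric.eventually_nhds_iff.1 this
    exact ⟨η, hη, fun y hy ↦ by simpa using h (y := L y) (by simpa using hy)⟩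
  obtain ⟨T, hT, hT0, hT1, hTη⟩ := exists_contDiff_det_fderiv_pi_bump (Fin (Module.finrank ℝ E)) hη
  have hdet (y : E) : (fderiv ℝ (L.symm ∘ T ∘ L) y).det = (fderiv ℝ T (L y)).det := by
    rw [L.symm.comp_fderiv, L.comp_right_fderiv]
    exact LinearMap.det_conj (fderiv ℝ T (L y) : _ →ₗ[ℝ] _) L.symm.toLinearEquiv
  refine ⟨L.symm ∘ T ∘ L, L.symm.contDiff.comp (hT.comp L.contDiff), fun y ↦ hdet y ▸ hT0 _,
    by rw [hdet, map_zero, hT1], fun y hy ↦ ?_⟩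
  rw [hdet]
  exact hTη _ (not_lt.1 fun h ↦ hy.not_gt (hLη y h))

-- With `T` a smooth bump of degree one supported in the ball of radius `m`, the integral of
-- `det D(T ∘ F)` is positive, while that of `det D(T ∘ P)` vanishes if `P` avoids this ball on `K`.
lemma exists_norm_lt_of_contDiff_of_eqOn_compl [Nontrivial E] {F P : E → E} (hF : ContDiff ℝ 1 F)
    (hP : ContDiff ℝ 1 P) {K : Set E} (hK : IsCompact K) (hFP : EqOn F P Kᶜ) {r m : ℝ}
    (hr : 0 < r) (hrK : ball 0 r ⊆ K) (hid : EqOn F id (ball 0 r)) (hm : 0 < m)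
    (hFm : ∀ x ∈ K \ ball 0 r, m ≤ ‖F x‖) : ∃ x ∈ K, ‖P x‖ < m := by
  by_contra! hPm
  let _ : MeasurableSpace E := borel E
  have : BorelSpace E := ⟨rfl⟩
  obtain ⟨T, hT, hT0, hT1, hTm⟩ := exists_contDiff_det_fderiv_bump E hm
  let g : E → ℝ := fun x ↦ (fderiv ℝ (T ∘ F) x).det - (fderiv ℝ (T ∘ P) x).det
  have hvanish {G : E → E} (hG : ContDiff ℝ 1 G) {x : E} (hx : m ≤ ‖G x‖) :
      (fderiv ℝ (T ∘ G) x).det = 0 := by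
    rw [det_fderiv_comp (hT.differentiable one_ne_zero) (hG.differentiable one_ne_zero),
      hTm _ hx, zero_mul]
  have hgcompl : ∀ x ∉ K, g x = 0 := fun x hx ↦ by
    have hnear : T ∘ F =ᶠ[𝓝 x] T ∘ P :=
      (hFP.eventuallyEq_of_mem (hK.isClosed.isOpen_compl.mem_nhds hx)).fun_comp T
    simp only [g, hnear.fderiv_eq, sub_self]
  have hgball : ∀ x ∈ ball (0 : E) r, g x = (fderiv ℝ T x).det := fun x hx ↦ by
    have hnear : T ∘ F =ᶠ[𝓝 x] T :=
      (hid.eventuallyEq_of_mem (isOpen_ball.mem_nhds hx)).fun_comp T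
    simp only [g, hnear.fderiv_eq, hvanish hP (hPm x (hrK hx)), sub_zero]
  have hgnonneg : ∀ x, 0 ≤ g x := fun x ↦ by
    by_cases hxK : x ∈ K
    · by_cases hx : x ∈ ball (0 : E) r
      · exact hgball x hx ▸ hT0 x
      · simp only [g, hvanish hF (hFm x ⟨hxK, hx⟩), hvanish hP (hPm x hxK), sub_self, le_refl]
    · exact (hgcompl x hxK).ge
  have hgcont : Continuous g :=
    (ContinuousLinearMap.continuous_det.comp ((hT.comp hF).continuous_fderiv one_ne_zero)).sub
      (ContinuousLinearMap.continuous_det.comp ((hT.comp hP).continuous_fderiv one_ne_zero))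
  refine (hgcont.integral_pos_of_hasCompactSupport_nonneg_nonzero (μ := Measure.addHaar)
    (HasCompactSupport.intro hK hgcompl) hgnonneg (x := 0) ?_).ne' ?_
  · rw [hgball 0 (mem_ball_self hr), hT1]
    exact one_ne_zero
  · exact integral_det_fderiv_sub_eq_zero _ (hT.comp hF) (hT.comp hP) hK fun x hx ↦
      congrArg T (hFP hx)

end Degree

/-- A map `F` is essential on `K` (in the sense of Granas, with respect to the value `0`) if every
continuous map on `K` with the same boundary values as `F` has a zero in `K`. -/
def IsEssentialOn {E E' : Type*} [TopologicalSpace E] [TopologicalSpace E'] [Zero E']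
    (F : E → E') (K : Set E) : Prop :=
  ∀ P : E → E', ContinuousOn P K → EqOn P F (frontier K) → ∃ x ∈ K, P x = 0

section Essential

open Filter Topology

namespace IsEssentialOn

variable {X Y Z : Type*} [TopologicalSpace X] [TopologicalSpace Y] [TopologicalSpace Z] [Zero Y]
  [Zero Z] {K : Set X}

lemma congr {F G : X → Y} (hF : IsEssentialOn F K) (hFG : EqOn F G (frontier K)) :
    IsEssentialOn G K :=
  fun P hP hPG ↦ hF P hP (hPG.trans hFG.symm)

lemma of_comp {F : X → Y} {J : Y → Z} (hJ : Continuous J) (hJ0 : ∀ y, J y = 0 → y = 0)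
    (h : IsEssentialOn (J ∘ F) K) : IsEssentialOn F K := by
  intro P hP hPF
  obtain ⟨x, hx, hx0⟩ := h (J ∘ P) (hJ.comp_continuousOn hP) fun x hx ↦ congrArg J (hPF hx)
  exact ⟨x, hx, hJ0 _ hx0⟩

-- Reparametrise the homotopy by a function equal to `0` on the boundary and to `1` on the set of
-- zeros of all its stages.
lemma exists_zero_of_homotopy [T2Space X] [NormalSpace X] [T1Space Y] (hK : IsCompact K)
    {Φ : ℝ → X → Y} (hΦ : ContinuousOn (Function.uncurry Φ) (Icc 0 1 ×ˢ K))
    (hΦK : ∀ t ∈ Icc (0 : ℝ) 1, ∀ x ∈ frontier K, Φ t x ≠ 0) (h0 : IsEssentialOn (Φ 0) K) :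
    ∃ x ∈ K, Φ 1 x = 0 := by
  let N : Set (ℝ × X) := (Icc 0 1 ×ˢ K) ∩ Function.uncurry Φ ⁻¹' {0}
  have hcompact : IsCompact (Icc (0 : ℝ) 1 ×ˢ K) := isCompact_Icc.prod hK
  have hN : IsClosed (Prod.snd '' N) :=
    ((hcompact.of_isClosed_subset (hΦ.preimage_isClosed_of_isClosed hcompact.isClosed
      isClosed_singleton) inter_subset_left).image continuous_snd).isClosed
  obtain ⟨u, hu0, hu1, hu⟩ := exists_continuous_zero_one_of_isClosed isClosed_frontier hN
    (disjoint_left.2 fun x hx ⟨⟨t, _⟩, ⟨⟨ht, _⟩, hzero⟩, hsnd⟩ ↦ hΦK t ht x hx (hsnd ▸ hzero))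
  obtain ⟨x, hxK, hx⟩ := h0 (fun x ↦ Φ (u x) x)
    (hΦ.comp (u.continuous.prodMk continuous_id).continuousOn fun x hx ↦ ⟨hu x, hx⟩)
    fun x hx ↦ by simp only [hu0 hx, Pi.zero_apply]
  have hux : u x = 1 := hu1 ⟨(u x, x), ⟨⟨hu x, hxK⟩, hx⟩, rfl⟩
  exact ⟨x, hxK, hux ▸ hx⟩

end IsEssentialOn

lemma exists_eqOn_frontier_of_local_homotopy {E E' : Type*} [NormedAddCommGroup E]
    [TopologicalSpace E'] [Zero E'] {F : E → E'} {K : Set E} (hF : ContinuousOn F K)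
    (hK : IsClosed K) (hF0 : ∀ x ∈ K, F x = 0 → x = 0) {r : ℝ} (hr : 0 < r)
    (hrK : closedBall 0 r ⊆ interior K) {Θ : ℝ → E → E'}
    (hΘ : ContinuousOn (Function.uncurry Θ) (Icc 0 1 ×ˢ closedBall 0 r))
    (hΘ0 : EqOn (Θ 0) F (closedBall 0 r))
    (hΘzero : ∀ t ∈ Icc (0 : ℝ) 1, ∀ x ∈ closedBall 0 r, Θ t x = 0 → x = 0) :
    ∃ G : E → E', ContinuousOn G K ∧ EqOn G F (frontier K) ∧
      EqOn G (Θ 1) (closedBall 0 (r / 2)) ∧ ∀ x ∈ K, G x = 0 → x = 0 := by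
  classical
  obtain ⟨u, hu0, hu1, hu⟩ := exists_continuous_zero_one_of_isClosed
    (isOpen_ball (x := (0 : E)) (ε := r)).isClosed_compl
    (isClosed_closedBall (x := (0 : E)) (ε := r / 2))
    (disjoint_compl_left_iff_subset.2 (closedBall_subset_ball (half_lt_self hr)))
  let G : E → E' := (closedBall 0 r).piecewise (fun x ↦ Θ (u x) x) F
  have hGin {x : E} (hx : x ∈ closedBall 0 r) : G x = Θ (u x) x := piecewise_eq_of_mem _ _ _ hx
  have hGout {x : E} (hx : x ∉ ball 0 r) : G x = F x := by
    by_cases hx' : x ∈ closedBall 0 r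
    · rw [hGin hx', hu0 hx]
      exact hΘ0 hx'
    · exact piecewise_eq_of_notMem _ _ _ hx'
  refine ⟨G, ?_, fun x hx ↦ hGout fun h ↦ hx.2 (hrK (ball_subset_closedBall h)), fun x hx ↦ ?_,
    fun x hx h ↦ ?_⟩
  · have hin : ContinuousOn G (closedBall 0 r) :=
      (hΘ.comp (u.continuous.prodMk continuous_id).continuousOn fun x hx ↦ ⟨hu x, hx⟩).congr
        fun x hx ↦ hGin hx
    have hout : ContinuousOn G (K \ ball 0 r) := (hF.mono sdiff_subset).congr fun x hx ↦ hGout hx.2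
    refine (hin.union_of_isClosed hout isClosed_closedBall (hK.sdiff isOpen_ball)).mono ?_
    exact fun x hx ↦ (em (x ∈ ball (0 : E) r)).imp (ball_subset_closedBall ·) fun h ↦ ⟨hx, h⟩
  · rw [hGin (closedBall_subset_closedBall (half_le_self hr.le) hx), hu1 hx, Pi.one_apply]
  · by_cases hxr : x ∈ closedBall 0 r
    · exact hΘzero _ (hu x) x hxr (hGin hxr ▸ h)
    · exact hF0 x hx (hGout (fun h ↦ hxr (ball_subset_closedBall h)) ▸ h)

lemma exists_continuous_eqOn {X E : Type*} [TopologicalSpace X] [NormalSpace X]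
    [NormedAddCommGroup E] [NormedSpace ℝ E] [FiniteDimensional ℝ E] {K : Set X} (hK : IsClosed K)
    {F : X → E} (hF : ContinuousOn F K) : ∃ G : X → E, Continuous G ∧ EqOn G F K := by
  obtain ⟨G, hG⟩ := ContinuousMap.exists_restrict_eq hK ⟨K.domRestrict F, hF.domRestrict⟩
  exact ⟨G, G.continuous, fun x hx ↦ DFunLike.congr_fun hG ⟨x, hx⟩⟩

variable {E : Type*} [NormedAddCommGroup E] [NormedSpace ℝ E] [FiniteDimensional ℝ E]

lemma exists_eq_of_eventuallyEq_id {F D : E → E} (hF : Continuous F) (hD : Continuous D)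
    {K : Set E} (hK : IsCompact K) (hK0 : K ∈ 𝓝 0) (hDK : ∀ x ∉ K, D x = 0)
    (hid : F =ᶠ[𝓝 0] id) (hF0 : ∀ x ∈ K, F x = 0 → x = 0) : ∃ x ∈ K, F x = D x := by
  cases subsingleton_or_nontrivial E
  · exact ⟨0, mem_of_mem_nhds hK0, Subsingleton.elim _ _⟩
  by_contra! hne
  obtain ⟨r, hr, hrK⟩ := Metric.eventually_nhds_iff_ball.1 (hid.and hK0)
  obtain ⟨m, hm, hFm⟩ := (hK.diff isOpen_ball).exists_forall_le' hF.norm.continuousOn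
    (s := K \ ball 0 (r / 2)) (a := 0) fun x hx ↦ norm_pos_iff.2 fun h ↦
      hx.2 (hF0 x hx.1 h ▸ mem_ball_self (half_pos hr))
  obtain ⟨m', hm', hFDm⟩ := hK.exists_forall_le' (hF.sub hD).norm.continuousOn (a := 0)
    fun x hx ↦ norm_pos_iff.2 (sub_ne_zero.2 (hne x hx))
  let ε := min m m' / 3
  have hε : 0 < ε := by positivity
  obtain ⟨F', hF', hFF', hid', -⟩ := hF.exists_contDiff_approx_and_eqOn 1 continuous_const
    (fun _ ↦ hε) isClosed_closedBall
    (isOpen_ball.mem_nhdsSet.2 (closedBall_subset_ball (half_lt_self hr)))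
    (contDiffOn_id.congr fun x hx ↦ (hrK x hx).1)
  obtain ⟨D', hD', hDD', hsupp⟩ := hD.exists_contDiff_approx 1 continuous_const (fun _ ↦ hε)
  have hD'K : ∀ x ∉ K, D' x = 0 := fun x hx ↦ by
    by_contra h
    exact hsupp h (hDK x hx)
  have hball : ball (0 : E) (r / 2) ⊆ ball 0 r := ball_subset_ball (half_le_self hr.le)
  obtain ⟨x, hxK, hx⟩ := exists_norm_lt_of_contDiff_of_eqOn_compl (F := F') (P := F' - D')
    hF' (hF'.sub hD') hK (fun x hx ↦ by simp [hD'K x hx]) (half_pos hr)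
    (fun x hx ↦ (hrK x (hball hx)).2)
    (fun x hx ↦ (hid' (ball_subset_closedBall hx)).trans (hrK x (hball hx)).1) hε
    fun x hx ↦ by
      have := hFm x hx
      have := norm_sub_norm_le (F x) (F' x)
      have := hFF' x
      rw [dist_comm, dist_eq_norm] at this
      linarith [min_le_left m m', show 3 * ε = min m m' by ring]
  have htri : ‖F x - D x‖ ≤ ‖F' x - D' x‖ + ‖F' x - F x‖ + ‖D' x - D x‖ := by
    rw [show F x - D x = F' x - D' x - (F' x - F x) + (D' x - D x) by abel]
    exact (norm_add_le _ _).trans (by gcongr; exact norm_sub_le _ _)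
  have := hFF' x
  have := hDD' x
  simp only [dist_eq_norm, Pi.sub_apply] at *
  linarith [hFDm x hxK, min_le_right m m', show 3 * ε = min m m' by ring]

lemma isEssentialOn_of_eventuallyEq_id {F : E → E} {K : Set E} (hF : ContinuousOn F K)
    (hK : IsCompact K) (hK0 : K ∈ 𝓝 0) (hid : F =ᶠ[𝓝 0] id) (hF0 : ∀ x ∈ K, F x = 0 → x = 0) :
    IsEssentialOn F K := by
  intro P hP hPF
  obtain ⟨G, hG, hGF⟩ := exists_continuous_eqOn hK.isClosed hF
  classical
  have hD : Continuous (K.indicator (F - P)) :=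
    continuous_indicator (fun x hx ↦ sub_eq_zero.2 (hPF hx).symm)
      (hK.isClosed.closure_eq.symm ▸ hF.sub hP)
  obtain ⟨x, hx, hGx⟩ := exists_eq_of_eventuallyEq_id hG hD hK hK0
    (fun x hx ↦ indicator_of_notMem hx _)
    (by filter_upwards [hid, hK0] with x hx hxK using (hGF hxK).trans hx)
    (fun x hx h ↦ hF0 x hx (hGF hx ▸ h))
  refine ⟨x, hx, ?_⟩
  rw [hGF hx, indicator_of_mem hx] at hGx
  exact sub_eq_self.1 hGx.symm

lemma isEssentialOn_of_eventuallyEq_openPartialHomeomorph {E' : Type*} [NormedAddCommGroup E']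
    [NormedSpace ℝ E'] (g : OpenPartialHomeomorph E E') (hg : 0 ∈ g.source) (hg0 : g 0 = 0)
    {F : E → E'} {K : Set E} (hF : ContinuousOn F K) (hK : IsCompact K) (hK0 : K ∈ 𝓝 0)
    (hFg : F =ᶠ[𝓝 0] g) (hF0 : ∀ x ∈ K, F x = 0 → x = 0) : IsEssentialOn F K := by
  obtain ⟨r, hr, hrg⟩ := Metric.nhds_basis_closedBall.mem_iff.1
    (g.open_target.mem_nhds (hg0 ▸ g.map_source hg))
  let ρ : E' → E' := fun v ↦ (r / max r ‖v‖) • v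
  have hmax (v : E') : 0 < max r ‖v‖ := hr.trans_le (le_max_left _ _)
  have hρ : Continuous ρ :=
    (continuous_const.div (continuous_const.max continuous_norm) fun v ↦ (hmax v).ne').smul
      continuous_id
  have hρmem (v : E') : ρ v ∈ closedBall 0 r := by
    rw [mem_closedBall_zero_iff, norm_smul, norm_div, Real.norm_of_nonneg hr.le,
      Real.norm_of_nonneg (hmax v).le, div_mul_eq_mul_div, div_le_iff₀ (hmax v)]
    gcongr
    exact le_max_right _ _
  have hρid {v : E'} (hv : ‖v‖ ≤ r) : ρ v = v := by
    simp only [ρ, max_eq_left hv, div_self hr.ne', one_smul]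
  have hJ : Continuous (g.symm ∘ ρ) :=
    g.continuousOn_symm.comp_continuous hρ fun v ↦ hrg (hρmem v)
  have hJ0 (v : E') (hv : g.symm (ρ v) = 0) : v = 0 := by
    have : ρ v = 0 := by rw [← g.right_inv (hrg (hρmem v)), hv, hg0]
    exact (smul_eq_zero.1 this).resolve_left (div_pos hr (hmax v)).ne'
  refine .of_comp hJ hJ0 (isEssentialOn_of_eventuallyEq_id (hJ.comp_continuousOn hF) hK hK0 ?_
    fun x hx h ↦ hF0 x hx (hJ0 _ h))
  have hsmall : ∀ᶠ x in 𝓝 (0 : E), g x ∈ closedBall 0 r :=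
    (g.continuousAt hg).eventually_mem (hg0.symm ▸ closedBall_mem_nhds 0 hr)
  filter_upwards [hFg, hsmall, g.open_source.mem_nhds hg] with x hx hgx hxs
  simp only [Function.comp_apply, hx, hρid (mem_closedBall_zero_iff.1 hgx), g.left_inv hxs, id]

lemma isEssentialOn_of_local_homotopy {E' : Type*} [NormedAddCommGroup E'] [NormedSpace ℝ E']
    (g : OpenPartialHomeomorph E E') (hg : 0 ∈ g.source) (hg0 : g 0 = 0) {F : E → E'} {K : Set E}
    (hF : ContinuousOn F K) (hK : IsCompact K) (hF0 : ∀ x ∈ K, F x = 0 → x = 0) {r : ℝ}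
    (hr : 0 < r) (hrK : closedBall 0 r ⊆ interior K) {Θ : ℝ → E → E'}
    (hΘ : ContinuousOn (Function.uncurry Θ) (Icc 0 1 ×ˢ closedBall 0 r))
    (hΘ0 : EqOn (Θ 0) F (closedBall 0 r)) (hΘ1 : EqOn (Θ 1) g (closedBall 0 r))
    (hΘzero : ∀ t ∈ Icc (0 : ℝ) 1, ∀ x ∈ closedBall 0 r, Θ t x = 0 → x = 0) :
    IsEssentialOn F K := by
  obtain ⟨G, hG, hGF, hGΘ, hGzero⟩ :=
    exists_eqOn_frontier_of_local_homotopy hF hK.isClosed hF0 hr hrK hΘ hΘ0 hΘzero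
  have hGg : G =ᶠ[𝓝 0] g := by
    filter_upwards [closedBall_mem_nhds 0 (half_pos hr)] with x hx
    exact (hGΘ hx).trans (hΘ1 (closedBall_subset_closedBall (half_le_self hr.le) hx))
  exact (isEssentialOn_of_eventuallyEq_openPartialHomeomorph g hg hg0 hG hK
    (mem_interior_iff_mem_nhds.1 (hrK (mem_closedBall_self hr.le))) hGg hGzero).congr hGF

end Essential
section Crossing

open Filter Topology

lemma exists_isClopen_disjoint_of_disjoint_connectedComponent {X : Type*} [TopologicalSpace X]
    [CompactSpace X] [T2Space X] {x : X} {Z : Set X} (hZ : IsClosed Z)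
    (hdisj : Disjoint Z (connectedComponent x)) :
    ∃ V : Set X, IsClopen V ∧ x ∈ V ∧ Disjoint Z V := by
  refine hZ.isCompact.induction_on (p := fun S ↦ ∃ V : Set X, IsClopen V ∧ x ∈ V ∧ Disjoint S V)
    ⟨univ, isClopen_univ, mem_univ x, empty_disjoint _⟩ ?_ ?_ fun z hz ↦ ?_
  · rintro S T hST ⟨V, hV, hxV, hTV⟩
    exact ⟨V, hV, hxV, hTV.mono_left hST⟩
  · rintro S T ⟨V, hV, hxV, hSV⟩ ⟨W, hW, hxW, hTW⟩
    exact ⟨V ∩ W, hV.inter hW, ⟨hxV, hxW⟩, disjoint_union_left.2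
      ⟨hSV.mono_right inter_subset_left, hTW.mono_right inter_subset_right⟩⟩
  · have hzx := disjoint_left.1 hdisj hz
    rw [connectedComponent_eq_iInter_isClopen] at hzx
    simp only [mem_iInter, not_forall, Subtype.exists, exists_prop] at hzx
    obtain ⟨V, ⟨hV, hxV⟩, hzV⟩ := hzx
    exact ⟨Vᶜ, mem_nhdsWithin_of_mem_nhds (hV.compl.isOpen.mem_nhds hzV), V, hV, hxV,
      disjoint_compl_left⟩

lemma exists_isCompact_disjoint_of_disjoint_connectedComponentIn {X : Type*} [TopologicalSpace X]
    [T2Space X] {K Z : Set X} {x : X} (hK : IsCompact K) (hKx : K ∈ 𝓝 x) (hZ : IsClosed Z)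
    (hdisj : Disjoint Z (connectedComponentIn K x)) :
    ∃ L ⊆ K, IsCompact L ∧ L ∈ 𝓝 x ∧ Disjoint Z L ∧ frontier L ⊆ frontier K := by
  have : CompactSpace K := isCompact_iff_compactSpace.1 hK
  rw [connectedComponentIn_eq_image (mem_of_mem_nhds hKx)] at hdisj
  obtain ⟨V, hV, hxV, hZV⟩ := exists_isClopen_disjoint_of_disjoint_connectedComponent
    (hZ.preimage continuous_subtype_val)
    (disjoint_left.2 fun y hy hyC ↦ disjoint_left.1 hdisj hy (mem_image_of_mem _ hyC))
  have hL : IsCompact (Subtype.val '' V) := hV.isClosed.isCompact.image continuous_subtype_val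
  have hnhds (y : K) (hyV : y ∈ V) (hyK : K ∈ 𝓝 (y : X)) : Subtype.val '' V ∈ 𝓝 (y : X) := by
    rw [← map_nhds_subtype_coe_eq_nhds y.2 hyK]
    exact image_mem_map (hV.isOpen.mem_nhds hyV)
  refine ⟨_, Subtype.coe_image_subset K V, hL, hnhds _ hxV hKx, ?_, ?_⟩
  · rw [disjoint_left]
    rintro _ hy ⟨y, hyV, rfl⟩
    exact disjoint_left.1 hZV hy hyV
  · intro y hy
    obtain ⟨y, hyV, rfl⟩ := hL.isClosed.frontier_subset hy
    exact ⟨subset_closure y.2, fun hyK ↦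
      hy.2 (mem_interior_iff_mem_nhds.2 (hnhds y hyV (mem_interior_iff_mem_nhds.1 hyK)))⟩

lemma smul_ne_of_norm_lt {E : Type*} [SeminormedAddCommGroup E] [NormedSpace ℝ E] {c : ℝ} {v w : E}
    (hc : |c| ≤ 1) (hvw : ‖v‖ < ‖w‖) : c • v ≠ w := by
  rintro rfl
  rw [norm_smul] at hvw
  exact hvw.not_ge (mul_le_of_le_one_left (norm_nonneg v) hc)

variable {X Y X' Y' : Type*} [NormedAddCommGroup X] [NormedSpace ℝ X] [NormedAddCommGroup Y]
  [NormedSpace ℝ Y] [NormedAddCommGroup X'] [NormedSpace ℝ X'] [FiniteDimensional ℝ X']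
  [NormedAddCommGroup Y'] [NormedSpace ℝ Y'] [FiniteDimensional ℝ Y']
  (g : OpenPartialHomeomorph (X' × Y') (X × Y)) (hg : 0 ∈ g.source)
  {A : Set X'} {B : Set Y'} (hA : IsCompact A) (hB : IsCompact B)
  {σ : X' → X × Y} {υ : Y' → X × Y} (hσ : ContinuousOn σ A) (hυ : ContinuousOn υ B)
  (hσg : ∀ᶠ a in 𝓝 0, σ a = g (a, 0)) (hυg : ∀ᶠ b in 𝓝 0, υ b = g (0, b))
  (hσυ : ∀ a ∈ A, ∀ b ∈ B, σ a = υ b → a = 0 ∧ b = 0)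

include hg hA hB hσ hυ hσg hυg hσυ

-- Near `0`, deform `g (a, 0) - g (0, b)` to the local homeomorphism `g (a, -b) - g 0` through
-- `g (a, -t b) - g (0, (1 - t) b)`.
lemma isEssentialOn_sub_of_eventuallyEq (hA0 : A ∈ 𝓝 0) (hB0 : B ∈ 𝓝 0) :
    IsEssentialOn (fun x : X' × Y' ↦ σ x.1 - υ x.2) (A ×ˢ B) := by
  let g' : OpenPartialHomeomorph (X' × Y') (X × Y) :=
    (((Homeomorph.refl X').prodCongr (Homeomorph.neg Y')).transOpenPartialHomeomorph
      g).transHomeomorph (Homeomorph.subRight (g 0))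
  have hg' (x : X' × Y') : g' x = g (x.1, -x.2) - g 0 := rfl
  have hK0 : A ×ˢ B ∈ 𝓝 (0 : X' × Y') := prod_mem_nhds hA0 hB0
  obtain ⟨r, hr, hr'⟩ := Metric.nhds_basis_closedBall.mem_iff.1 (inter_mem
    (interior_mem_nhds.2 hK0) (inter_mem (g.open_source.mem_nhds hg) (prod_mem_nhds hσg hυg)))
  have hsource (v : X' × Y') (hv : ‖v.1‖ ≤ r ∧ ‖v.2‖ ≤ r) : v ∈ g.source :=
    (hr' (mem_closedBall_zero_iff.2 (norm_prod_le_iff.2 hv))).2.1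
  have hball (t : ℝ) (ht : |t| ≤ 1) (x : X' × Y') (hx : x ∈ closedBall 0 r) :
      (x.1, t • x.2) ∈ g.source ∧ ((0 : X'), t • x.2) ∈ g.source := by
    simp only [mem_closedBall_zero_iff, norm_prod_le_iff] at hx
    have hsmul : ‖t • x.2‖ ≤ r := by
      rw [norm_smul]
      exact (mul_le_of_le_one_left (norm_nonneg _) ht).trans hx.2
    exact ⟨hsource _ ⟨hx.1, hsmul⟩, hsource _ ⟨norm_zero.trans_le hr.le, hsmul⟩⟩
  have habs {t : ℝ} (ht : t ∈ Icc (0 : ℝ) 1) : |-t| ≤ 1 ∧ |1 - t| ≤ 1 := by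
    constructor <;> rw [abs_le] <;> constructor <;> linarith [ht.1, ht.2]
  refine isEssentialOn_of_local_homotopy g' (by simpa [g', Prod.map, Prod.mk_zero_zero] using hg)
    (by simp [hg', Prod.mk_zero_zero])
    (F := fun x ↦ σ x.1 - υ x.2) (r := r)
    (Θ := fun t x ↦ g (x.1, (-t) • x.2) - g (0, (1 - t) • x.2)) ?_ (hA.prod hB) ?_ hr
    (fun x hx ↦ (hr' hx).1) ?_ ?_ ?_ ?_
  · exact (hσ.comp continuousOn_fst fun x hx ↦ hx.1).sub
      (hυ.comp continuousOn_snd fun x hx ↦ hx.2)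
  · exact fun x hx h ↦ Prod.ext_iff.2 (hσυ _ hx.1 _ hx.2 (sub_eq_zero.1 h))
  · exact (g.continuousOn.comp (by fun_prop) fun z hz ↦ (hball _ (habs hz.1).1 _ hz.2).1).sub
      (g.continuousOn.comp (by fun_prop) fun z hz ↦ (hball _ (habs hz.1).2 _ hz.2).2)
  · intro x hx
    simp only [neg_zero, zero_smul, sub_zero, one_smul, (hr' hx).2.2.1.symm, (hr' hx).2.2.2.symm]
  · intro x _
    simp only [hg', neg_smul, one_smul, sub_self, zero_smul, Prod.mk_zero_zero]
  · intro t ht x hx h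
    have heq := g.injOn (hball _ (habs ht).1 x hx).1 (hball _ (habs ht).2 x hx).2 (sub_eq_zero.1 h)
    refine Prod.ext (Prod.ext_iff.1 heq).1 ?_
    calc x.2 = (1 - t) • x.2 - (-t) • x.2 := by module
      _ = 0 := sub_eq_zero.2 (Prod.ext_iff.1 heq).2.symm

variable (hσfst : ∀ a ∈ frontier A, ∀ b ∈ B, ‖(υ b).1‖ < ‖(σ a).1‖)
  (hυsnd : ∀ a ∈ A, ∀ b ∈ frontier B, ‖(σ a).2‖ < ‖(υ b).2‖)

include hσfst hυsnd

lemma exists_fst_eq_zero_and_snd_eq_zero (hA0 : A ∈ 𝓝 0) (hB0 : B ∈ 𝓝 0) :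
    ∃ a ∈ A, ∃ b ∈ B, (σ a).1 = 0 ∧ (υ b).2 = 0 := by
  let Φ : ℝ → X' × Y' → X × Y := fun t x ↦
    ((σ x.1).1 - (1 - t) • (υ x.2).1, (1 - t) • (σ x.1).2 - (υ x.2).2)
  have hΦ : ContinuousOn (Function.uncurry Φ) (Icc 0 1 ×ˢ A ×ˢ B) := by
    have hσ' : ContinuousOn (fun z : ℝ × X' × Y' ↦ σ z.2.1) (Icc 0 1 ×ˢ A ×ˢ B) :=
      hσ.comp (by fun_prop) fun z hz ↦ hz.2.1
    have hυ' : ContinuousOn (fun z : ℝ × X' × Y' ↦ υ z.2.2) (Icc 0 1 ×ˢ A ×ˢ B) :=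
      hυ.comp (by fun_prop) fun z hz ↦ hz.2.2
    have hcoeff : ContinuousOn (fun z : ℝ × X' × Y' ↦ 1 - z.1) (Icc 0 1 ×ˢ A ×ˢ B) := by fun_prop
    exact (hσ'.fst.sub (hcoeff.smul hυ'.fst)).prodMk ((hcoeff.smul hσ'.snd).sub hυ'.snd)
  have hΦfr : ∀ t ∈ Icc (0 : ℝ) 1, ∀ x ∈ frontier (A ×ˢ B), Φ t x ≠ 0 := by
    intro t ht x hx h
    rw [frontier_prod_eq, hA.isClosed.closure_eq, hB.isClosed.closure_eq] at hx
    obtain ⟨h1, h2⟩ := Prod.mk_eq_zero.1 h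
    have ht' : |1 - t| ≤ 1 := abs_le.2 ⟨by linarith [ht.2], by linarith [ht.1]⟩
    rcases hx with ⟨hxA, hxB⟩ | ⟨hxA, hxB⟩
    · exact smul_ne_of_norm_lt ht' (hυsnd _ hxA _ hxB) (sub_eq_zero.1 h2)
    · exact smul_ne_of_norm_lt ht' (hσfst _ hxA _ hxB) (sub_eq_zero.1 h1).symm
  have hΦ0 : IsEssentialOn (Φ 0) (A ×ˢ B) := by
    have hsub : Φ 0 = fun x ↦ σ x.1 - υ x.2 := by
      funext x
      simp only [Φ, sub_zero, one_smul]
      rfl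
    rw [hsub]
    exact isEssentialOn_sub_of_eventuallyEq g hg hA hB hσ hυ hσg hυg hσυ hA0 hB0
  obtain ⟨x, hx, hzero⟩ := IsEssentialOn.exists_zero_of_homotopy (hA.prod hB) hΦ hΦfr hΦ0
  simp only [Φ, sub_self, zero_smul, sub_zero, zero_sub, Prod.mk_eq_zero, neg_eq_zero] at hzero
  exact ⟨x.1, hx.1, x.2, hx.2, hzero⟩

lemma exists_mem_connectedComponentIn_fst_eq_zero_and_snd_eq_zero (hA0 : A ∈ 𝓝 0) (hB0 : B ∈ 𝓝 0) :
    (∃ a ∈ connectedComponentIn A 0, (σ a).1 = 0) ∧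
      ∃ b ∈ connectedComponentIn B 0, (υ b).2 = 0 := by
  constructor <;> by_contra! hne
  · obtain ⟨L, hLA, hL, hL0, hLZ, hfr⟩ :=
      exists_isCompact_disjoint_of_disjoint_connectedComponentIn hA hA0
        (hσ.fst.preimage_isClosed_of_isClosed hA.isClosed isClosed_singleton)
        (disjoint_left.2 fun a ha haC ↦ hne a haC ha.2)
    obtain ⟨a, ha, _, -, h, -⟩ := exists_fst_eq_zero_and_snd_eq_zero g hg hL hB (hσ.mono hLA) hυ
      hσg hυg (fun a ha ↦ hσυ a (hLA ha)) (fun a ha ↦ hσfst a (hfr ha))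
      (fun a ha ↦ hυsnd a (hLA ha)) hL0 hB0
    exact disjoint_left.1 hLZ ⟨hLA ha, h⟩ ha
  · obtain ⟨L, hLB, hL, hL0, hLZ, hfr⟩ :=
      exists_isCompact_disjoint_of_disjoint_connectedComponentIn hB hB0
        (hυ.snd.preimage_isClosed_of_isClosed hB.isClosed isClosed_singleton)
        (disjoint_left.2 fun b hb hbC ↦ hne b hbC hb.2)
    obtain ⟨_, -, b, hb, -, h⟩ := exists_fst_eq_zero_and_snd_eq_zero g hg hA hL hσ (hυ.mono hLB)
      hσg hυg (fun a ha b hb ↦ hσυ a ha b (hLB hb)) (fun a ha b hb ↦ hσfst a ha b (hLB hb))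
      (fun a ha b hb ↦ hυsnd a ha b (hfr hb)) hA0 hL0
    exact disjoint_left.1 hLZ ⟨hLB hb, h⟩ hb

end Crossing

section Dynamics

open Filter Topology

variable {f : M ≃ₜ M} {ε : ℝ}

lemma iterZ_add (f : M ≃ₜ M) (j k : ℤ) (x : M) : iterZ f (j + k) x = iterZ f j (iterZ f k x) := by
  simp only [iterZ, zpow_add, Equiv.Perm.mul_apply]

lemma iterZ_natCast (f : M ≃ₜ M) (k : ℕ) (x : M) : iterZ f k x = f^[k] x := by
  rw [iterZ, zpow_natCast, ← Equiv.Perm.iterate_eq_pow]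
  rfl

lemma iterZ_symm (f : M ≃ₜ M) (k : ℤ) (x : M) : iterZ f.symm k x = iterZ f (-k) x := by
  have hinv : f.symm.toEquiv = f.toEquiv⁻¹ := rfl
  simp only [iterZ, hinv, inv_zpow']

lemma continuous_iterZ (f : M ≃ₜ M) (k : ℤ) : Continuous (iterZ f k) := by
  obtain ⟨n, rfl | rfl⟩ := k.eq_nat_or_neg
  · simpa only [funext (iterZ_natCast f n)] using f.continuous.iterate n
  · have hsymm : iterZ f (-n) = f.symm^[n] := by
      funext x
      rw [← iterZ_symm, iterZ_natCast]
    simpa only [hsymm] using f.symm.continuous.iterate n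

lemma mem_WsLoc {x y : M} : y ∈ WsLoc f ε x ↔ ∀ k : ℕ, dist (f^[k] x) (f^[k] y) ≤ ε := by
  simp only [WsLoc, mem_ofPred_eq, ← iterZ_natCast]
  exact ⟨fun h k ↦ h k k.cast_nonneg, fun h k hk ↦ by lift k to ℕ using hk; exact h k⟩

lemma mem_Ws {x y : M} :
    y ∈ Ws f x ↔ Tendsto (fun k : ℕ ↦ dist (f^[k] x) (f^[k] y)) atTop (𝓝 0) := by
  simp only [Ws, mem_ofPred_eq, ← iterZ_natCast, ← Nat.map_cast_int_atTop, tendsto_map'_iff]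
  rfl

lemma Wu_eq_Ws_symm (f : M ≃ₜ M) (x : M) : Wu f x = Ws f.symm x := by
  ext y
  simp only [Wu, Ws, mem_ofPred_eq, iterZ_symm, ← map_neg_atTop, tendsto_map'_iff]
  rfl

lemma WsLoc_subset_closedBall {x : M} : WsLoc f ε x ⊆ closedBall x ε :=
  fun _ hy ↦ mem_closedBall'.2 (mem_WsLoc.1 hy 0)

lemma isClosed_ofPred_mem_WsLoc (f : M ≃ₜ M) (ε : ℝ) :
    IsClosed {w : M × M | w.2 ∈ WsLoc f ε w.1} := by
  simp only [mem_WsLoc, ofPred_forall]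
  exact isClosed_iInter fun k ↦ isClosed_le (((f.continuous.iterate k).comp continuous_fst).dist
    ((f.continuous.iterate k).comp continuous_snd)) continuous_const

lemma isClosed_WsLoc (f : M ≃ₜ M) (ε : ℝ) (x : M) : IsClosed (WsLoc f ε x) :=
  (isClosed_ofPred_mem_WsLoc f ε).preimage (Continuous.prodMk_right x)

lemma eventually_forall_mem_WsLoc [CompactSpace M] {P : M → M → Prop} {x : M}
    (h : ∀ z ∈ WsLoc f ε x, ∀ᶠ w in 𝓝 (x, z), P w.1 w.2) :
    ∀ᶠ y in 𝓝 x, ∀ z ∈ WsLoc f ε y, P y z := by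
  have := (isCompact_univ (X := M)).eventually_forall_of_forall_eventually (x₀ := x)
    (P := fun y z ↦ z ∈ WsLoc f ε y → P y z) fun z _ ↦ by
      by_cases hz : z ∈ WsLoc f ε x
      · exact (h z hz).mono fun w hw _ ↦ hw
      · filter_upwards [(isClosed_ofPred_mem_WsLoc f ε).isOpen_compl.mem_nhds (x := (x, z)) hz]
          with w hw hw'
        exact absurd hw' hw
  simpa only [mem_univ, true_imp_iff] using this

namespace IsExpansive

lemma mono {α : ℝ} (hf : IsExpansive f α) (hε : ε ≤ α) : IsExpansive f ε :=
  fun x y hxy ↦ (hf x y hxy).imp fun _ hk ↦ hε.trans_lt hk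

lemma symm (hf : IsExpansive f ε) : IsExpansive f.symm ε := by
  intro x y hxy
  obtain ⟨k, hk⟩ := hf x y hxy
  exact ⟨-k, by simpa only [iterZ_symm, neg_neg] using hk⟩

lemma eq_of_mem_WsLoc_of_mem_WsLoc_symm (hf : IsExpansive f ε) {x y : M} (hs : y ∈ WsLoc f ε x)
    (hu : y ∈ WsLoc f.symm ε x) : x = y := by
  by_contra hne
  obtain ⟨k, hk⟩ := hf x y hne
  rcases le_total 0 k with hk0 | hk0
  · exact hk.not_ge (hs k hk0)
  · have := hu (-k) (neg_nonneg.2 hk0)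
    rw [iterZ_symm, iterZ_symm, neg_neg] at this
    exact hk.not_ge this

variable [CompactSpace M]

lemma exists_forall_dist_lt (hf : IsExpansive f ε) {η : ℝ} (hη : 0 < η) :
    ∃ N : ℕ, ∀ x y, (∀ k : ℤ, |k| ≤ N → dist (iterZ f k x) (iterZ f k y) ≤ ε) → dist x y < η := by
  let U : ℕ → Set (M × M) := fun N ↦
    ⋃ k : ℤ, ⋃ _ : |k| ≤ N, {w | ε < dist (iterZ f k w.1) (iterZ f k w.2)}
  have hU (N : ℕ) : IsOpen (U N) := isOpen_iUnion fun k ↦ isOpen_iUnion fun _ ↦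
    isOpen_lt continuous_const (((continuous_iterZ f k).comp continuous_fst).dist
      ((continuous_iterZ f k).comp continuous_snd))
  have hUmono : Monotone U := fun m n hmn ↦ iUnion_mono fun k ↦ iUnion_mono' fun hk ↦
    ⟨hk.trans (Nat.cast_le.2 hmn), le_rfl⟩
  have hcover : {w : M × M | η ≤ dist w.1 w.2} ⊆ ⋃ N, U N := by
    intro w hw
    obtain ⟨k, hk⟩ := hf w.1 w.2 (dist_pos.1 (hη.trans_le hw))
    exact mem_iUnion.2 ⟨k.natAbs, mem_iUnion₂.2 ⟨k, (Int.natCast_natAbs k).ge, hk⟩⟩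
  obtain ⟨N, hN⟩ := (isClosed_le continuous_const continuous_dist).isCompact.elim_directed_cover
    U hU hcover hUmono.directed_le
  refine ⟨N, fun x y hxy ↦ not_le.1 fun hle ↦ ?_⟩
  obtain ⟨k, hk, hlt⟩ := mem_iUnion₂.1 (hN (a := (x, y)) hle)
  exact hlt.not_ge (hxy k hk)

lemma eventually_forall_mem_WsLoc_dist_lt (hf : IsExpansive f ε) {η : ℝ} (hη : 0 < η) :
    ∀ᶠ k in atTop, ∀ x, ∀ y ∈ WsLoc f ε x, dist (f^[k] x) (f^[k] y) < η := by
  obtain ⟨N, hN⟩ := hf.exists_forall_dist_lt hη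
  filter_upwards [eventually_ge_atTop N] with k hk x y hy
  rw [← iterZ_natCast, ← iterZ_natCast]
  refine hN _ _ fun j hj ↦ ?_
  rw [← iterZ_add, ← iterZ_add]
  exact hy _ (by have := neg_le_of_abs_le hj; omega)

lemma exists_pos_forall_mem_WsLoc_le_dist (hf : IsExpansive f ε) (hε : 0 < ε) :
    ∃ c > 0, ∀ x, ∀ y ∈ WsLoc f ε x, (∃ k, dist (f^[k] x) (f^[k] y) = ε) → c ≤ dist x y := by
  obtain ⟨N, hN⟩ := eventually_atTop.1 (hf.eventually_forall_mem_WsLoc_dist_lt hε)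
  have hclose : ∀ᶠ w in uniformity M, ∀ k ∈ Iio N, dist (f^[k] w.1) (f^[k] w.2) < ε :=
    (eventually_all_finite (finite_Iio N)).2 fun k _ ↦
      CompactSpace.uniformContinuous_of_continuous (f.continuous.iterate k)
        (dist_mem_uniformity hε)
  obtain ⟨c, hc, hclose⟩ := mem_uniformity_dist.1 hclose
  refine ⟨c, hc, fun x y hy ⟨k, hk⟩ ↦ not_lt.1 fun hlt ↦ hk.not_lt ?_⟩
  rcases lt_or_ge k N with hkN | hkN
  · exact hclose hlt k hkN
  · exact hN k hkN x y hy

end IsExpansive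

end Dynamics

/-- A chart around a periodic point `p` of `f` in which the return map `f^[period]` is the
hyperbolic linear map `(a, b) ↦ (a / 2, 2 b)`. The conjugacy is only required where both `v` and its
image lie in a closed ball on which the inverse chart is defined, which makes the notion symmetric
under `f ↦ f⁻¹`. -/
structure HyperbolicChart (f : M ≃ₜ M) (p : M) (X Y : Type*) [NormedAddCommGroup X]
    [NormedSpace ℝ X] [NormedAddCommGroup Y] [NormedSpace ℝ Y] where
  chart : OpenPartialHomeomorph M (X × Y)
  period : ℕ
  radius : ℝ
  period_pos : 0 < period
  radius_pos : 0 < radius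
  iterate_period : f^[period] p = p
  mem_source : p ∈ chart.source
  chart_apply_self : chart p = 0
  closedBall_subset_target : closedBall 0 radius ⊆ chart.target
  iterate_symm_apply : ∀ v ∈ closedBall (0 : X × Y) radius,
    ((2 : ℝ)⁻¹ • v.1, (2 : ℝ) • v.2) ∈ closedBall (0 : X × Y) radius →
      f^[period] (chart.symm v) = chart.symm ((2 : ℝ)⁻¹ • v.1, (2 : ℝ) • v.2)

section HyperbolicChart

open Filter Topology

variable {f : M ≃ₜ M} {p : M}

lemma exists_openPartialHomeomorph_of_homeomorph {X Y : Type*} [TopologicalSpace X]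
    [TopologicalSpace Y] {U : Set X} {V : Set Y} (hU : IsOpen U) (hV : IsOpen V)
    (hUne : U.Nonempty) (h : U ≃ₜ V) :
    ∃ e : OpenPartialHomeomorph X Y, e.source = U ∧ e.target = V ∧
      ∀ z (hz : z ∈ U), e z = h ⟨z, hz⟩ := by
  have : Nonempty U := hUne.to_subtype
  have : Nonempty V := h.symm.surjective.nonempty
  let i := hU.isOpenEmbedding_subtypeVal.toOpenPartialHomeomorph
  let j := hV.isOpenEmbedding_subtypeVal.toOpenPartialHomeomorph
  refine ⟨(i.symm.trans h.toOpenPartialHomeomorph).trans j, ?_, ?_, fun z hz ↦ ?_⟩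
  · simp [i, j]
  · simp [i, j]
  · exact congrArg (fun z ↦ (h z : Y)) (i.left_inv (x := ⟨z, hz⟩) (mem_univ _))

lemma exists_hyperbolicChart {n r : ℕ} (hp : p ∈ PerHr f n r) {V : Set M} (hV : V ∈ 𝓝 p) :
    ∃ h : HyperbolicChart f p (Fin r → ℝ) (Fin (n - r) → ℝ),
      MapsTo h.chart.symm (closedBall 0 h.radius) V := by
  obtain ⟨l, hl, hfix, U, W, φ, hU, hW, hW0, hpU, hφp, hφ⟩ := hp
  obtain ⟨e, heU, heW, heφ⟩ := exists_openPartialHomeomorph_of_homeomorph hU hW ⟨p, hpU⟩ φ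
  have hpow (z : M) : (f.toEquiv ^ l) z = f^[l] z := by
    rw [← Equiv.Perm.iterate_eq_pow]
    rfl
  rw [hpow] at hfix
  have hep : e p = 0 := (heφ p hpU).trans hφp
  have hsymm0 : e.symm 0 = p := hep ▸ e.left_inv (heU.symm ▸ hpU)
  have hcont : ContinuousAt e.symm 0 := e.continuousAt_symm (heW.symm ▸ hW0)
  have hret : ∀ᶠ v in 𝓝 0, f^[l] (e.symm v) ∈ U :=
    ((f.continuous.iterate l).continuousAt.comp hcont).eventually
      (hU.mem_nhds (by rwa [Function.comp_apply, hsymm0, hfix]))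
  obtain ⟨ρ, hρ, hball⟩ := nhds_basis_closedBall.mem_iff.1 (inter_mem hret
    (inter_mem (hW.mem_nhds hW0) (hcont.preimage_mem_nhds (by rwa [hsymm0]))))
  refine ⟨⟨e, l, ρ, hl, hρ, hfix, heU.symm ▸ hpU, hep, fun v hv ↦ heW.symm ▸ (hball hv).2.1, ?_⟩,
    fun v hv ↦ (hball hv).2.2⟩
  intro v hv _
  have hvU : e.symm v ∈ U := heU ▸ e.map_target (heW.symm ▸ (hball hv).2.1)
  have hconj := hφ _ hvU ((hpow _).symm ▸ (hball hv).1)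
  rw [← heφ, ← heφ, hpow, e.right_inv (heW.symm ▸ (hball hv).2.1)] at hconj
  rw [← e.left_inv (heU.symm ▸ (hball hv).1 : f^[l] (e.symm v) ∈ e.source), hconj]
  congr 1
  ext i
  · exact div_eq_inv_mul _ _
  · rfl

lemma mk_zero_mem_closedBall_zero_iff {X Y : Type*} [SeminormedAddCommGroup X]
    [SeminormedAddCommGroup Y] {a : X} {r : ℝ} :
    (a, (0 : Y)) ∈ closedBall (0 : X × Y) r ↔ ‖a‖ ≤ r := by
  rw [mem_closedBall_zero_iff, Prod.norm_mk, norm_zero, sup_of_le_left (norm_nonneg a)]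

namespace HyperbolicChart

variable {X Y : Type*} [NormedAddCommGroup X] [NormedSpace ℝ X] [NormedAddCommGroup Y]
  [NormedSpace ℝ Y] (h : HyperbolicChart f p X Y)

/-- The same chart with its two factors exchanged, as a hyperbolic chart for the inverse map. -/
def swap : HyperbolicChart f.symm p Y X where
  chart := h.chart.transHomeomorph (Homeomorph.prodComm X Y)
  period := h.period
  radius := h.radius
  period_pos := h.period_pos
  radius_pos := h.radius_pos
  iterate_period := (congrArg f.symm^[h.period] h.iterate_period).symm.trans
    (Function.LeftInverse.iterate f.symm_apply_apply h.period p)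
  mem_source := h.mem_source
  chart_apply_self := congrArg Prod.swap h.chart_apply_self
  closedBall_subset_target v hv := h.closedBall_subset_target (by
    simpa [Prod.norm_def, max_comm] using hv)
  iterate_symm_apply v hv hv' := by
    have hconj := h.iterate_symm_apply ((2 : ℝ) • v.2, (2 : ℝ)⁻¹ • v.1)
      (by simpa [Prod.norm_def, max_comm] using hv')
      (by simpa [Prod.norm_def, max_comm, smul_smul] using hv)
    simp only [smul_smul, inv_mul_cancel₀ (two_ne_zero' ℝ),
      mul_inv_cancel₀ (two_ne_zero' ℝ), one_smul] at hconj
    change f.symm^[h.period] (h.chart.symm (v.2, v.1)) = _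
    rw [← hconj]
    exact Function.LeftInverse.iterate f.symm_apply_apply h.period _

lemma symm_zero : h.chart.symm 0 = p := by
  rw [← h.chart_apply_self, h.chart.left_inv h.mem_source]

lemma iterate_period_mul (m : ℕ) : f^[h.period * m] p = p := by
  rw [Function.iterate_mul]
  exact Function.iterate_fixed h.iterate_period m

lemma iterate_symm_mk_zero {a : X} (ha : ‖a‖ ≤ h.radius) (m : ℕ) :
    f^[h.period * m] (h.chart.symm (a, 0)) = h.chart.symm ((2 : ℝ)⁻¹ ^ m • a, 0) := by
  have hle (m : ℕ) : ‖(2 : ℝ)⁻¹ ^ m • a‖ ≤ h.radius := by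
    rw [norm_smul, Real.norm_of_nonneg (by positivity)]
    exact (mul_le_of_le_one_left (norm_nonneg a)
      (pow_le_one₀ (by norm_num) (by norm_num))).trans ha
  induction m with
  | zero => simp
  | succ m ih =>
    rw [Nat.mul_succ, Nat.add_comm, Function.iterate_add_apply, ih, h.iterate_symm_apply _
      (mk_zero_mem_closedBall_zero_iff.2 (hle m)), smul_zero, smul_smul, ← pow_succ']
    rw [smul_zero, smul_smul, ← pow_succ']
    exact mk_zero_mem_closedBall_zero_iff.2 (hle (m + 1))

lemma eventually_forall_symm_mem {U : Set M} (hU : U ∈ 𝓝 p) :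
    ∀ᶠ m in atTop, ∀ a : X, ‖a‖ ≤ h.radius → h.chart.symm ((2 : ℝ)⁻¹ ^ m • a, 0) ∈ U := by
  have hcont : ContinuousAt h.chart.symm 0 := h.chart.continuousAt_symm
    (h.closedBall_subset_target (mem_closedBall_self h.radius_pos.le))
  obtain ⟨κ, hκ, hball⟩ := nhds_basis_closedBall.mem_iff.1
    (hcont.preimage_mem_nhds (h.symm_zero.symm ▸ hU))
  have hlim : Tendsto (fun m : ℕ ↦ (2 : ℝ)⁻¹ ^ m * h.radius) atTop (𝓝 0) := by
    simpa using (tendsto_pow_atTop_nhds_zero_of_lt_one (r := (2 : ℝ)⁻¹) (by norm_num)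
      (by norm_num)).mul_const h.radius
  filter_upwards [hlim.eventually_le_const hκ] with m hm a ha
  refine hball (mk_zero_mem_closedBall_zero_iff.2 (le_trans ?_ hm))
  rw [norm_smul, Real.norm_of_nonneg (by positivity)]
  gcongr

/-- Parametrisation of the stable set of `p`: the stable disc of the chart, scaled by `2 ^ N`, is
pulled back along `f^[period * N]`. On the closed ball of radius `2 ^ N * radius` it extends the
parametrisation `a ↦ chart.symm (a, 0)` of the stable disc. -/
noncomputable def stableParam (N : ℕ) (a : X) : M :=
  f.symm^[h.period * N] (h.chart.symm ((2 : ℝ)⁻¹ ^ N • a, 0))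

lemma iterate_stableParam (N : ℕ) (a : X) :
    f^[h.period * N] (h.stableParam N a) = h.chart.symm ((2 : ℝ)⁻¹ ^ N • a, 0) :=
  Function.RightInverse.iterate f.apply_symm_apply _ _

lemma stableParam_of_norm_le (N : ℕ) {a : X} (ha : ‖a‖ ≤ h.radius) :
    h.stableParam N a = h.chart.symm (a, 0) := by
  rw [stableParam, ← h.iterate_symm_mk_zero ha]
  exact Function.LeftInverse.iterate f.symm_apply_apply _ _

lemma stableParam_zero_right (N : ℕ) : h.stableParam N 0 = p := by
  rw [h.stableParam_of_norm_le N (norm_zero.trans_le h.radius_pos.le), Prod.mk_zero_zero,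
    h.symm_zero]

variable {N : ℕ} {a : X}

lemma norm_inv_two_pow_smul_le (ha : a ∈ closedBall 0 (2 ^ N * h.radius)) :
    ‖(2 : ℝ)⁻¹ ^ N • a‖ ≤ h.radius := by
  rwa [norm_smul, norm_pow, norm_inv, Real.norm_two, inv_pow, inv_mul_le_iff₀ (by positivity),
    ← mem_closedBall_zero_iff]

lemma continuousOn_stableParam (N : ℕ) :
    ContinuousOn (h.stableParam N) (closedBall 0 (2 ^ N * h.radius)) :=
  (f.symm.continuous.iterate _).comp_continuousOn <| h.chart.continuousOn_symm.comp
    (by fun_prop) fun _ ha ↦ h.closedBall_subset_target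
      (mk_zero_mem_closedBall_zero_iff.2 (h.norm_inv_two_pow_smul_le ha))

lemma chart_iterate_stableParam (ha : a ∈ closedBall 0 (2 ^ N * h.radius)) :
    h.chart (f^[h.period * N] (h.stableParam N a)) = ((2 : ℝ)⁻¹ ^ N • a, 0) := by
  rw [iterate_stableParam, h.chart.right_inv (h.closedBall_subset_target
    (mk_zero_mem_closedBall_zero_iff.2 (h.norm_inv_two_pow_smul_le ha)))]

lemma eq_zero_of_stableParam_eq (ha : a ∈ closedBall 0 (2 ^ N * h.radius))
    (hap : h.stableParam N a = p) : a = 0 := by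
  have hchart := h.chart_iterate_stableParam ha
  rw [hap, h.iterate_period_mul, h.chart_apply_self] at hchart
  exact (smul_eq_zero.1 (Prod.ext_iff.1 hchart).1.symm).resolve_left (by positivity)

lemma eventually_forall_dist_iterate_stableParam_lt (N : ℕ) {η : ℝ} (hη : 0 < η) :
    ∀ᶠ j in atTop, ∀ a ∈ closedBall (0 : X) (2 ^ N * h.radius),
      dist (f^[j] p) (f^[j] (h.stableParam N a)) < η := by
  have hclose : ∀ᶠ z in 𝓝 p, ∀ i ∈ Iio h.period, dist (f^[i] p) (f^[i] z) < η := by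
    refine (eventually_all_finite (finite_Iio _)).2 fun i _ ↦ ?_
    have hcont : Continuous fun z ↦ dist (f^[i] p) (f^[i] z) :=
      continuous_const.dist (f.continuous.iterate i)
    exact hcont.continuousAt.eventually (gt_mem_nhds (by simpa using hη))
  obtain ⟨m₀, hm₀⟩ := eventually_atTop.1 (h.eventually_forall_symm_mem hclose)
  filter_upwards [eventually_ge_atTop (h.period * (m₀ + N))] with j hj a ha
  have hdiv : m₀ + N ≤ j / h.period := (Nat.le_div_iff_mul_le h.period_pos).2 (by rwa [mul_comm])
  obtain ⟨m, hm⟩ := Nat.exists_eq_add_of_le' (le_of_add_le_right hdiv)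
  rw [← Nat.mod_add_div j h.period, Function.iterate_add_apply, Function.iterate_add_apply,
    h.iterate_period_mul, hm, Nat.mul_add, Function.iterate_add_apply, iterate_stableParam,
    h.iterate_symm_mk_zero (h.norm_inv_two_pow_smul_le ha)]
  exact hm₀ m (by omega) _ (h.norm_inv_two_pow_smul_le ha) _ (Nat.mod_lt _ h.period_pos)

lemma stableParam_mem_Ws (ha : a ∈ closedBall 0 (2 ^ N * h.radius)) :
    h.stableParam N a ∈ Ws f p := by
  refine mem_Ws.2 (Metric.tendsto_nhds.2 fun η hη ↦ ?_)
  filter_upwards [h.eventually_forall_dist_iterate_stableParam_lt N hη] with j hj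
  simpa using hj a ha

lemma stableParam_mem_connectedComponentIn {S : Set X} {V : Set M} (hS : IsPreconnected S)
    (hSball : S ⊆ closedBall 0 (2 ^ N * h.radius)) (h0 : 0 ∈ S) (hSV : MapsTo (h.stableParam N) S V)
    (ha : a ∈ S) : h.stableParam N a ∈ connectedComponentIn (Ws f p ∩ V) p := by
  have hp : p ∈ h.stableParam N '' S := ⟨0, h0, h.stableParam_zero_right N⟩
  have hsub : h.stableParam N '' S ⊆ Ws f p ∩ V :=
    image_subset_iff.2 fun b hb ↦ ⟨h.stableParam_mem_Ws (hSball hb), hSV hb⟩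
  have himage := hS.image _ ((h.continuousOn_stableParam N).mono hSball)
  exact himage.subset_connectedComponentIn hp hsub (mem_image_of_mem _ ha)

lemma symm_mk_zero_mem_connectedComponentIn {V : Set M}
    (hV : MapsTo h.chart.symm (closedBall 0 h.radius) V) (ha : ‖a‖ ≤ h.radius) :
    h.chart.symm (a, 0) ∈ connectedComponentIn (Ws f p ∩ V) p := by
  rw [← h.stableParam_of_norm_le 0 ha]
  refine h.stableParam_mem_connectedComponentIn (S := closedBall 0 h.radius)
    (convex_closedBall 0 _).isPreconnected (by rw [pow_zero, one_mul])
    (mem_closedBall_self h.radius_pos.le) (fun b hb ↦ ?_) (mem_closedBall_zero_iff.2 ha)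
  have hb' := mem_closedBall_zero_iff.1 hb
  rw [h.stableParam_of_norm_le 0 hb']
  exact hV (mk_zero_mem_closedBall_zero_iff.2 hb')

/-- The part of the domain of the chart corresponding to the ball of half the radius; the chart
conjugates `f^[period]` to the linear map at every point of it. -/
def box : Set M := h.chart.source ∩ h.chart ⁻¹' closedBall 0 (h.radius / 2)

lemma box_mem_nhds : h.box ∈ 𝓝 p :=
  inter_mem (h.chart.open_source.mem_nhds h.mem_source)
    ((h.chart.continuousAt h.mem_source).preimage_mem_nhds
      (h.chart_apply_self.symm ▸ closedBall_mem_nhds 0 (half_pos h.radius_pos)))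

lemma chart_iterate_of_mem_box {z : M} (hz : z ∈ h.box) :
    h.chart (f^[h.period] z) = ((2 : ℝ)⁻¹ • (h.chart z).1, (2 : ℝ) • (h.chart z).2) := by
  have hnorm := norm_prod_le_iff.1 (mem_closedBall_zero_iff.1 hz.2)
  have hball : ((2 : ℝ)⁻¹ • (h.chart z).1, (2 : ℝ) • (h.chart z).2) ∈ closedBall 0 h.radius := by
    refine mem_closedBall_zero_iff.2 (max_le ?_ ?_) <;>
      simp only [norm_smul, norm_inv, Real.norm_two] <;> linarith [h.radius_pos]
  conv_lhs => rw [← h.chart.left_inv hz.1, h.iterate_symm_apply _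
    (closedBall_subset_closedBall (half_le_self h.radius_pos.le) hz.2) hball,
    h.chart.right_inv (h.closedBall_subset_target hball)]

lemma snd_chart_eq_zero_of_forall_iterate_mem_box {z : M}
    (hz : ∀ m, f^[h.period * m] z ∈ h.box) : (h.chart z).2 = 0 := by
  have hexp (m : ℕ) : (h.chart (f^[h.period * m] z)).2 = (2 : ℝ) ^ m • (h.chart z).2 := by
    induction m with
    | zero => simp
    | succ m ih =>
      rw [Nat.mul_succ, Nat.add_comm, Function.iterate_add_apply, h.chart_iterate_of_mem_box (hz m),
        ih, smul_smul, pow_succ']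
  by_contra hne
  obtain ⟨m, hm⟩ := pow_unbounded_of_one_lt (h.radius / 2 / ‖(h.chart z).2‖) one_lt_two
  rw [div_lt_iff₀ (norm_pos_iff.2 hne)] at hm
  have hle := (norm_prod_le_iff.1 (mem_closedBall_zero_iff.1 (hz m).2)).2
  rw [hexp, norm_smul, norm_pow, Real.norm_two] at hle
  exact hm.not_ge hle

lemma swap_box : h.swap.box = h.box := by
  ext z
  simp [box, swap, Prod.norm_def, max_comm]

lemma snd_chart_eq_zero_of_mem_WsLoc {ε : ℝ} (hbox : closedBall p ε ⊆ h.box) {z : M}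
    (hz : z ∈ WsLoc f ε p) : (h.chart z).2 = 0 := by
  refine h.snd_chart_eq_zero_of_forall_iterate_mem_box fun m ↦ hbox ?_
  rw [mem_closedBall']
  simpa only [h.iterate_period_mul] using mem_WsLoc.1 hz (h.period * m)

lemma continuousAt_chart_of_mem_WsLoc {ε : ℝ} (hbox : closedBall p ε ⊆ h.box) {z : M}
    (hz : z ∈ WsLoc f ε p) : ContinuousAt (fun w : M × M ↦ h.chart w.2) (p, z) :=
  (h.chart.continuousAt (hbox (WsLoc_subset_closedBall hz)).1).comp continuousAt_snd

section CompactSpace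

variable [CompactSpace M] {ε : ℝ}

lemma eventually_forall_norm_snd_chart_lt (hbox : closedBall p ε ⊆ h.box) {c : ℝ} (hc : 0 < c) :
    ∀ᶠ q in 𝓝 p, ∀ z ∈ WsLoc f ε q, ‖(h.chart z).2‖ < c :=
  eventually_forall_mem_WsLoc fun z hz ↦
    (h.continuousAt_chart_of_mem_WsLoc hbox hz).snd.norm.eventually (gt_mem_nhds (by
      simpa only [h.snd_chart_eq_zero_of_mem_WsLoc hbox hz, norm_zero] using hc))

lemma exists_pos_eventually_forall_lt_norm_fst_chart (hbox : closedBall p ε ⊆ h.box) {d : ℝ}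
    (hd : 0 < d) :
    ∃ c > 0, ∀ᶠ q in 𝓝 p, ∀ z ∈ WsLoc f ε q, d ≤ dist q z → c < ‖(h.chart z).1‖ := by
  have hsource {z : M} (hz : z ∈ WsLoc f ε p) : z ∈ h.chart.source :=
    (hbox (WsLoc_subset_closedBall hz)).1
  have hK : IsCompact (WsLoc f ε p ∩ {z | d ≤ dist p z}) :=
    ((isClosed_WsLoc f ε p).inter
      (isClosed_le continuous_const (continuous_const.dist continuous_id))).isCompact
  have hpos : ∀ z ∈ WsLoc f ε p ∩ {z | d ≤ dist p z}, 0 < ‖(h.chart z).1‖ := by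
    refine fun z hz ↦ norm_pos_iff.2 fun hz0 ↦ ?_
    have hzp : z = p := h.chart.injOn (hsource hz.1) h.mem_source <| h.chart_apply_self.symm ▸
      Prod.ext hz0 (h.snd_chart_eq_zero_of_mem_WsLoc hbox hz.1)
    exact hd.not_ge (by simpa [hzp] using hz.2)
  obtain ⟨c, hc, hle⟩ := hK.exists_forall_le' (f := fun z ↦ ‖(h.chart z).1‖)
    (h.chart.continuousOn.mono fun z hz ↦ hsource hz.1).fst.norm hpos
  refine ⟨c / 2, half_pos hc, eventually_forall_mem_WsLoc fun z hz ↦ ?_⟩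
  rcases lt_or_ge (dist p z) d with hlt | hge
  · filter_upwards [continuous_dist.continuousAt.eventually_lt continuousAt_const hlt] with w hw hw'
    exact absurd hw' hw.not_ge
  · exact ((h.continuousAt_chart_of_mem_WsLoc hbox hz).fst.norm.eventually
      (lt_mem_nhds ((half_lt_self hc).trans_le (hle z ⟨hz, hge⟩)))).mono fun w hw _ ↦ hw

lemma eventually_forall_norm_fst_chart_lt_norm_fst_chart (hf : IsExpansive f ε) (hε : 0 < ε)
    (hbox : closedBall p ε ⊆ h.box) :
    ∀ᶠ q in 𝓝 p, ∀ z ∈ WsLoc f ε q, (∃ k, dist (f^[k] q) (f^[k] z) = ε) →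
      ∀ w ∈ WsLoc f.symm ε q, ‖(h.chart w).1‖ < ‖(h.chart z).1‖ := by
  obtain ⟨d, hd, hdist⟩ := hf.exists_pos_forall_mem_WsLoc_le_dist hε
  obtain ⟨c, hc, hlarge⟩ := h.exists_pos_eventually_forall_lt_norm_fst_chart hbox hd
  filter_upwards [hlarge, h.swap.eventually_forall_norm_snd_chart_lt (h.swap_box.symm ▸ hbox) hc]
    with q hq hq' z hz hzε w hw
  exact (hq' w hw).trans (hq z hz (hdist q z hz hzε))

end CompactSpace

/-- The parameters in the closed ball of radius `2 ^ N * radius` whose point under `stableParam N`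
belongs to the `ε`-local stable set of `p`. -/
def stableDomain (N : ℕ) (ε : ℝ) : Set X :=
  closedBall 0 (2 ^ N * h.radius) ∩ h.stableParam N ⁻¹' WsLoc f ε p

variable {ε : ℝ}

lemma isClosed_stableDomain (N : ℕ) (ε : ℝ) : IsClosed (h.stableDomain N ε) :=
  (h.continuousOn_stableParam N).preimage_isClosed_of_isClosed isClosed_closedBall
    (isClosed_WsLoc f ε p)

lemma isCompact_stableDomain [ProperSpace X] (N : ℕ) (ε : ℝ) : IsCompact (h.stableDomain N ε) :=
  (isCompact_closedBall 0 _).of_isClosed_subset (h.isClosed_stableDomain N ε) inter_subset_left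

lemma stableDomain_mem_nhds (ha : ‖a‖ < 2 ^ N * h.radius)
    (hlt : ∀ k, dist (f^[k] p) (f^[k] (h.stableParam N a)) < ε) : h.stableDomain N ε ∈ 𝓝 a := by
  have hball : closedBall 0 (2 ^ N * h.radius) ∈ 𝓝 a :=
    closedBall_mem_nhds_of_mem (mem_ball_zero_iff.2 ha)
  obtain ⟨K, hK⟩ := eventually_atTop.1
    (h.eventually_forall_dist_iterate_stableParam_lt N (dist_nonneg.trans_lt (hlt 0)))
  have hsmall : ∀ᶠ b in 𝓝 a, ∀ k ∈ Iio K, dist (f^[k] p) (f^[k] (h.stableParam N b)) < ε :=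
    (eventually_all_finite (finite_Iio K)).2 fun k _ ↦
      (continuousAt_const.dist ((f.continuous.iterate k).continuousAt.comp
        ((h.continuousOn_stableParam N).continuousAt hball))).eventually (gt_mem_nhds (hlt k))
  filter_upwards [hball, hsmall] with b hb hbK
  refine ⟨hb, mem_WsLoc.2 fun k ↦ ?_⟩
  rcases lt_or_ge k K with hk | hk
  · exact (hbK k hk).le
  · exact (hK k hk b hb).le

lemma stableDomain_mem_nhds_zero (N : ℕ) (hε : 0 < ε) : h.stableDomain N ε ∈ 𝓝 0 := by
  refine h.stableDomain_mem_nhds ?_ fun k ↦ ?_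
  · rw [norm_zero]
    exact mul_pos (by positivity) h.radius_pos
  · rwa [h.stableParam_zero_right, dist_self]

lemma exists_dist_iterate_stableParam_eq_of_mem_frontier (ha : ‖a‖ < 2 ^ N * h.radius)
    (hfr : a ∈ frontier (h.stableDomain N ε)) :
    ∃ k, dist (f^[k] p) (f^[k] (h.stableParam N a)) = ε := by
  have hle := mem_WsLoc.1 ((h.isClosed_stableDomain N ε).frontier_subset hfr).2
  by_contra! hne
  exact hfr.2 (mem_interior_iff_mem_nhds.2
    (h.stableDomain_mem_nhds ha fun k ↦ (hle k).lt_of_ne (hne k)))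

lemma eventually_forall_mem_stableDomain_norm_lt [CompactSpace M] (hf : IsExpansive f ε) :
    ∀ᶠ N in atTop, ∀ a ∈ h.stableDomain N ε, ‖a‖ < 2 ^ N * h.radius := by
  have hnear : ∀ᶠ z in 𝓝 p, ‖(h.chart z).1‖ < h.radius :=
    (h.chart.continuousAt h.mem_source).fst.norm.eventually (gt_mem_nhds (by
      simpa [h.chart_apply_self] using h.radius_pos))
  obtain ⟨η, hη, hball⟩ := Metric.eventually_nhds_iff.1 hnear
  filter_upwards [(tendsto_id.const_mul_atTop' h.period_pos).eventually
    (hf.eventually_forall_mem_WsLoc_dist_lt hη)] with N hN a ha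
  have hdist := hN p _ ha.2
  simp only [id, h.iterate_period_mul] at hdist
  have hnorm := hball (dist_comm p _ ▸ hdist)
  rwa [h.chart_iterate_stableParam ha.1, norm_smul, norm_pow, norm_inv, Real.norm_two, inv_pow,
    inv_mul_lt_iff₀ (by positivity)] at hnorm

end HyperbolicChart

end HyperbolicChart

section LocalProduct

open Filter Topology

variable {f : M ≃ₜ M} {α ε : ℝ} {p q : M}

namespace HyperbolicChart

variable {X' Y' : Type*} [NormedAddCommGroup X'] [NormedSpace ℝ X'] [NormedAddCommGroup Y']
  [NormedSpace ℝ Y']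

lemma eventually_stableParam_eq_symm_mk_zero (h : HyperbolicChart f q X' Y') (N : ℕ) :
    ∀ᶠ a in 𝓝 0, h.stableParam N a = h.chart.symm (a, 0) := by
  filter_upwards [closedBall_mem_nhds 0 h.radius_pos] with a ha
  exact h.stableParam_of_norm_le N (mem_closedBall_zero_iff.1 ha)

lemma stableParam_mem_connectedComponentIn_closedBall (h : HyperbolicChart f q X' Y') {N : ℕ}
    {a : X'} (hε : 0 < ε) (ha : a ∈ connectedComponentIn (h.stableDomain N ε) 0) :
    h.stableParam N a ∈ connectedComponentIn (Ws f q ∩ closedBall q ε) q := by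
  have hsub := connectedComponentIn_subset (h.stableDomain N ε) 0
  exact h.stableParam_mem_connectedComponentIn isPreconnected_connectedComponentIn
    (fun b hb ↦ (hsub hb).1)
    (mem_connectedComponentIn (mem_of_mem_nhds (h.stableDomain_mem_nhds_zero N hε)))
    (fun b hb ↦ WsLoc_subset_closedBall (hsub hb).2) ha

end HyperbolicChart

variable {X Y X' Y' : Type*} [NormedAddCommGroup X] [NormedSpace ℝ X] [NormedAddCommGroup Y]
  [NormedSpace ℝ Y] [NormedAddCommGroup X'] [NormedSpace ℝ X'] [FiniteDimensional ℝ X']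
  [NormedAddCommGroup Y'] [NormedSpace ℝ Y'] [FiniteDimensional ℝ Y']

lemma HyperbolicChart.exists_mem_connectedComponentIn_fst_eq_zero_and_snd_eq_zero [CompactSpace M]
    (h : HyperbolicChart f q X' Y') (e : OpenPartialHomeomorph M (X × Y)) (hf : IsExpansive f ε)
    (hε : 0 < ε) (he : closedBall q ε ⊆ e.source)
    (hs : ∀ z ∈ WsLoc f ε q, (∃ k, dist (f^[k] q) (f^[k] z) = ε) →
      ∀ w ∈ WsLoc f.symm ε q, ‖(e w).1‖ < ‖(e z).1‖)
    (hu : ∀ w ∈ WsLoc f.symm ε q, (∃ k, dist (f.symm^[k] q) (f.symm^[k] w) = ε) →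
      ∀ z ∈ WsLoc f ε q, ‖(e z).2‖ < ‖(e w).2‖) :
    (∃ z ∈ connectedComponentIn (Ws f q ∩ closedBall q ε) q, (e z).1 = 0) ∧
      ∃ w ∈ connectedComponentIn (Wu f q ∩ closedBall q ε) q, (e w).2 = 0 := by
  obtain ⟨N, hNs, hNu⟩ := ((h.eventually_forall_mem_stableDomain_norm_lt hf).and
    (h.swap.eventually_forall_mem_stableDomain_norm_lt hf.symm)).exists
  have hA := h.isCompact_stableDomain N ε
  have hB := h.swap.isCompact_stableDomain N ε
  have hsource {g : M ≃ₜ M} {z : M} (hz : z ∈ WsLoc g ε q) : z ∈ e.source :=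
    he (WsLoc_subset_closedBall hz)
  have hq : h.chart.symm 0 ∈ e.source := by
    rw [h.symm_zero]
    exact he (mem_closedBall_self hε.le)
  have h0 : (0 : X' × Y') ∈ h.chart.target := h.chart_apply_self ▸ h.chart.map_source h.mem_source
  have hinter : ∀ a ∈ h.stableDomain N ε, ∀ b ∈ h.swap.stableDomain N ε,
      e (h.stableParam N a) = e (h.swap.stableParam N b) → a = 0 ∧ b = 0 := by
    intro a ha b hb hab
    have heq := e.injOn (hsource ha.2) (hsource hb.2) hab
    have hqa := hf.eq_of_mem_WsLoc_of_mem_WsLoc_symm ha.2 (heq ▸ hb.2)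
    exact ⟨h.eq_zero_of_stableParam_eq ha.1 hqa.symm,
      h.swap.eq_zero_of_stableParam_eq hb.1 (hqa.trans heq).symm⟩
  obtain ⟨⟨a, ha, ha0⟩, b, hb, hb0⟩ :=
    _root_.exists_mem_connectedComponentIn_fst_eq_zero_and_snd_eq_zero (h.chart.symm.trans e)
      ⟨h0, hq⟩ hA hB
      (e.continuousOn.comp ((h.continuousOn_stableParam N).mono inter_subset_left)
        fun a ha ↦ hsource ha.2)
      (e.continuousOn.comp ((h.swap.continuousOn_stableParam N).mono inter_subset_left)
        fun b hb ↦ hsource hb.2)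
      ((h.eventually_stableParam_eq_symm_mk_zero N).mono fun a ha ↦ congrArg e ha)
      ((h.swap.eventually_stableParam_eq_symm_mk_zero N).mono fun b hb ↦ congrArg e hb) hinter
      (fun a ha b hb ↦ hs _ (hA.isClosed.frontier_subset ha).2
        (h.exists_dist_iterate_stableParam_eq_of_mem_frontier
          (hNs a (hA.isClosed.frontier_subset ha)) ha) _ hb.2)
      (fun a ha b hb ↦ hu _ (hB.isClosed.frontier_subset hb).2
        (h.swap.exists_dist_iterate_stableParam_eq_of_mem_frontier
          (hNu b (hB.isClosed.frontier_subset hb)) hb) _ ha.2)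
      (h.stableDomain_mem_nhds_zero N hε) (h.swap.stableDomain_mem_nhds_zero N hε)
  rw [Wu_eq_Ws_symm]
  exact ⟨⟨_, h.stableParam_mem_connectedComponentIn_closedBall hε ha, ha0⟩,
    _, h.swap.stableParam_mem_connectedComponentIn_closedBall hε hb, hb0⟩

namespace HyperbolicChart

variable (h : HyperbolicChart f p X Y) {V : Set M} {z : M}

lemma mem_connectedComponentIn_Ws_of_snd_chart_eq_zero
    (hV : MapsTo h.chart.symm (closedBall 0 h.radius) V) (hz : z ∈ h.box)
    (hz0 : (h.chart z).2 = 0) : z ∈ connectedComponentIn (Ws f p ∩ V) p := by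
  have hle := (norm_prod_le_iff.1 (mem_closedBall_zero_iff.1 hz.2)).1
  have hzs : h.chart.symm ((h.chart z).1, 0) = z := by
    rw [← hz0, Prod.mk.eta, h.chart.left_inv hz.1]
  exact hzs ▸ h.symm_mk_zero_mem_connectedComponentIn hV
    (hle.trans (half_le_self h.radius_pos.le))

lemma mapsTo_swap_symm (hV : MapsTo h.chart.symm (closedBall 0 h.radius) V) :
    MapsTo h.swap.chart.symm (closedBall 0 h.swap.radius) V := fun v hv ↦
  hV (x := v.swap) (by simpa [swap, Prod.norm_def, max_comm] using hv)

lemma mem_connectedComponentIn_Wu_of_fst_chart_eq_zero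
    (hV : MapsTo h.chart.symm (closedBall 0 h.radius) V) (hz : z ∈ h.box)
    (hz0 : (h.chart z).1 = 0) : z ∈ connectedComponentIn (Wu f p ∩ V) p := by
  rw [Wu_eq_Ws_symm]
  exact h.swap.mem_connectedComponentIn_Ws_of_snd_chart_eq_zero (h.mapsTo_swap_symm hV)
    (h.swap_box.symm ▸ hz) hz0

lemma eventually_exists_fst_chart_eq_zero_and_exists_snd_chart_eq_zero [CompactSpace M]
    (hf : IsExpansive f ε) (hε : 0 < ε) (hbox : closedBall p (2 * ε) ⊆ h.box) (n : ℕ) :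
    ∀ᶠ q in 𝓝 p, q ∈ PerH f n →
      (∃ z ∈ connectedComponentIn (Ws f q ∩ closedBall p (2 * ε)) q, (h.chart z).1 = 0) ∧
        ∃ w ∈ connectedComponentIn (Wu f q ∩ closedBall p (2 * ε)) q, (h.chart w).2 = 0 := by
  have hbox' : closedBall p ε ⊆ h.box :=
    (closedBall_subset_closedBall (by linarith)).trans hbox
  filter_upwards [closedBall_mem_nhds p hε,
    h.eventually_forall_norm_fst_chart_lt_norm_fst_chart hf hε hbox',
    h.swap.eventually_forall_norm_fst_chart_lt_norm_fst_chart hf.symm hε (h.swap_box.symm ▸ hbox')]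
    with q hqp hs hu hq
  obtain ⟨r, -, hq⟩ := mem_iUnion₂.1 hq
  obtain ⟨k, -⟩ := exists_hyperbolicChart hq univ_mem
  have hball : closedBall q ε ⊆ closedBall p (2 * ε) :=
    closedBall_subset_closedBall' (by linarith [mem_closedBall.1 hqp])
  have hcc (S : Set M) : connectedComponentIn (S ∩ closedBall q ε) q ⊆
      connectedComponentIn (S ∩ closedBall p (2 * ε)) q :=
    connectedComponentIn_mono q (inter_subset_inter_right S hball)
  obtain ⟨⟨z, hz, hz0⟩, w, hw, hw0⟩ := k.exists_mem_connectedComponentIn_fst_eq_zero_and_snd_eq_zero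
    h.chart hf hε (fun z hz ↦ (hbox (hball hz)).1) hs hu
  exact ⟨⟨z, hcc _ hz, hz0⟩, w, hcc _ hw, hw0⟩

end HyperbolicChart

theorem stmt10_general [CompactSpace M] {n : ℕ} (hα : 0 < α) (hf : IsExpansive f α)
    (hp : p ∈ PerH f n) {V : Set M} (hV : V ∈ 𝓝 p) :
    ∃ W : Set M, IsOpen W ∧ p ∈ W ∧ ∀ q ∈ PerH f n ∩ W,
      (connectedComponentIn (Ws f q ∩ V) q ∩ connectedComponentIn (Wu f p ∩ V) p).Nonempty ∧
      (connectedComponentIn (Wu f q ∩ V) q ∩ connectedComponentIn (Ws f p ∩ V) p).Nonempty := by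
  obtain ⟨r, -, hp⟩ := mem_iUnion₂.1 hp
  obtain ⟨h, hhV⟩ := exists_hyperbolicChart hp hV
  obtain ⟨κ, hκ, hball⟩ := nhds_basis_closedBall.mem_iff.1 (inter_mem h.box_mem_nhds hV)
  obtain ⟨ε, hε, hεα, hεκ⟩ : ∃ ε > 0, ε ≤ α ∧ 2 * ε ≤ κ :=
    ⟨min α (κ / 2), by positivity, min_le_left .., by linarith [min_le_right α (κ / 2)]⟩
  replace hball := (closedBall_subset_closedBall hεκ).trans hball
  obtain ⟨W, hW, hWo, hpW⟩ := _root_.mem_nhds_iff.1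
    (h.eventually_exists_fst_chart_eq_zero_and_exists_snd_chart_eq_zero (hf.mono hεα) hε
      (hball.trans inter_subset_left) n)
  have hmono (S : Set M) : S ∩ closedBall p (2 * ε) ⊆ S ∩ V :=
    inter_subset_inter_right S (hball.trans inter_subset_right)
  refine ⟨W, hWo, hpW, fun q ⟨hq, hqW⟩ ↦ ?_⟩
  obtain ⟨⟨z, hz, hz0⟩, w, hw, hw0⟩ := hW hqW hq
  have hz_box := (hball (connectedComponentIn_subset _ _ hz).2).1
  have hw_box := (hball (connectedComponentIn_subset _ _ hw).2).1
  exact ⟨⟨z, connectedComponentIn_mono q (hmono _) hz,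
      h.mem_connectedComponentIn_Wu_of_fst_chart_eq_zero hhV hz_box hz0⟩,
    ⟨w, connectedComponentIn_mono q (hmono _) hw,
      h.mem_connectedComponentIn_Ws_of_snd_chart_eq_zero hhV hw_box hw0⟩⟩

end LocalProduct

/-- **Proposition (2).** For every `p ∈ Per_H` there are open neighborhoods `V₁, V₂` of `p`
such that every `q ∈ Per_H ∩ V₁` satisfies `S_q ∩ U_p ≠ ∅` and `U_q ∩ S_p ≠ ∅`, where
`S_z = cc_z(W^s(z) ∩ V₂)` and `U_z = cc_z(W^u(z) ∩ V₂)`. -/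
theorem stmt10 {M : Type*} [MetricSpace M] [CompactSpace M] [ConnectedSpace M]
    (n : ℕ) [ChartedSpace (EuclideanSpace ℝ (Fin n)) M]
    (f : M ≃ₜ M) (α : ℝ) (hα : 0 < α) (hexp : IsExpansive f α) :
    ∀ p ∈ PerH f n, ∃ V₁ V₂ : Set M,
      IsOpen V₁ ∧ IsOpen V₂ ∧ p ∈ V₁ ∧ p ∈ V₂ ∧
      ∀ q ∈ PerH f n ∩ V₁,
        (connectedComponentIn (Ws f q ∩ V₂) q ∩ connectedComponentIn (Wu f p ∩ V₂) p).Nonempty ∧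
        (connectedComponentIn (Wu f q ∩ V₂) q ∩ connectedComponentIn (Ws f p ∩ V₂) p).Nonempty := by
  intro p hp
  obtain ⟨V₁, hV₁, hpV₁, h⟩ := stmt10_general hα hexp hp Filter.univ_mem
  exact ⟨V₁, univ, hV₁, isOpen_univ, hpV₁, mem_univ p, h⟩
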